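/- Call a pair (γ,δ) ∈ [N]×[T] admissible if (α,β,γ,δ) ∈ 𝔛 for some α ∈ [N], β ∈ [M]. Let γ₀ > 0. Suppose the random initial pair (σ₀, ρ₀) has distribution ν on [N]×[T], and define the probability distribution μ̄ on 𝔛 by μ̄(α,β,γ,δ) = μ_r(α)·μ_s(β) if f(β)=1 and μ̄(α,β,γ,δ) = μ_r(α)·μ_s(β)·ν(γ,δ) if f(β)=0. Suppose matrices W_χ ∈ ℝ^{ℓ×ℓ} (symmetric), R_χ ∈ ℝ^{n×n} (symmetric), G_{γ,δ} ∈ ℝ^{n×n}, F_{γ,δ} ∈ ℝ^{m×n}, and the numbers ν(γ,δ) ≥ 0 with Σ_{γ∈[N]} Σ_{δ∈[T]} ν(γ,δ) = 1 satisfy, for every χ = (α,β,γ,δ) ∈ 𝔛: the symmetric block matrix [[R_χ − μ̄(χ) E_α E_αᵀ, A_α G_{γ,δ} + B_α F_{γ,δ}],[(A_α G_{γ,δ} + B_α F_{γ,δ})ᵀ, G_{γ,δ} + G_{γ,δ}ᵀ − D̄_χ(R)]] is positive definite; the symmetric block matrix [[W_χ, C_α G_{γ,δ} + D_α F_{γ,δ}],[(C_α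 G_{γ,δ} + D_α F_{γ,δ})ᵀ, G_{γ,δ} + G_{γ,δ}ᵀ − D̄_χ(R)]] is positive definite; and Σ_{χ∈𝔛} tr(W_χ) < γ₀. Then G_{γ,δ} is invertible for every admissible (γ,δ), and with feedback gains K_{γ,δ} = F_{γ,δ} G_{γ,δ}⁻¹ for admissible (γ,δ), the closed-loop system Σ_K is mean square stable and ‖Σ_K‖₂² < γ₀. -/

import Mathlib

open MeasureTheory ProbabilityTheory Matrix

noncomputable section

/-- The state space `[N] × [M] × [N] × [T]` of the extended process `r̄`.
`Fin N`, `Fin M`, `Fin T` play the roles of `[N] = {1,…,N}`, `[M]`, `[T]`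
(with `Fin T` being the 0-indexed version of `[T] = {1,…,T}`, i.e. `δ ∈ [T]`
corresponds to `δ - 1 : Fin T`). -/
abbrev XT (NN MM T : ℕ) : Type := Fin NN × Fin MM × Fin NN × Fin T

/-- `X` is a time-homogeneous Markov chain with transition probability matrix `P`:
for every `k`, every state `j` and every sequence of states `i`,
`Pr(X(k+1) = j ∧ X(l) = i l for all l ≤ k) = P (i k) j * Pr(X(l) = i l for all l ≤ k)`. -/
def IsMarkovChain {Ω : Type} {_mΩ : MeasurableSpace Ω} (μ : Measure Ω) {S : Type}
    (X : ℕ → Ω → S) (P : S → S → ℝ) : Prop :=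
  ∀ (k : ℕ) (j : S) (i : ℕ → S),
    (μ {ω | X (k + 1) ω = j ∧ ∀ l ≤ k, X l ω = i l}).toReal
      = P (i k) j * (μ {ω | ∀ l ≤ k, X l ω = i l}).toReal

/-- `⌊m⌋_T`, the unique element of `{0,…,T-1}` congruent to `m` modulo `T`, as `Fin T`. -/
def intToFin (T : ℕ) [NeZero T] (a : ℤ) : Fin T :=
  ⟨(a % (T : ℤ)).toNat, by
    have hT : 0 < (T : ℤ) := by
      exact_mod_cast Nat.pos_of_ne_zero (NeZero.ne T)
    have h1 : 0 ≤ a % (T : ℤ) := Int.emod_nonneg a (by omega)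
    have h2 : a % (T : ℤ) < (T : ℤ) := Int.emod_lt_of_pos a hT
    omega⟩

-- `τ(k)`: the most recent observation time `≤ k` (i.e. the largest `j ≤ k` with
-- `f(s(j)) = 1`), or `τ₀` if no observation has occurred up to time `k` (`k < t₀`).
open Classical in
def tauZ {Ω : Type} {MM : ℕ} (s : ℕ → Ω → Fin MM) (f : Fin MM → Bool)
    (τ₀ : ℤ) (k : ℕ) (ω : Ω) : ℤ :=
  if ∃ j ≤ k, f (s j ω) = true
  then ((Nat.findGreatest (fun j => f (s j ω) = true) k : ℕ) : ℤ)
  else τ₀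

-- `σ(k) = r(τ(k))` if an observation occurred by time `k` (i.e. `k ≥ t₀`), else `σ₀`.
open Classical in
def sigmaProc {Ω : Type} {NN MM : ℕ} (r : ℕ → Ω → Fin NN) (s : ℕ → Ω → Fin MM)
    (f : Fin MM → Bool) (σ₀ : Fin NN) (k : ℕ) (ω : Ω) : Fin NN :=
  if ∃ j ≤ k, f (s j ω) = true
  then r (Nat.findGreatest (fun j => f (s j ω) = true) k) ω
  else σ₀

/-- `ρ(k) = ⌊k - τ(k)⌋_T + 1 ∈ [T]`, represented 0-indexed as `⌊k - τ(k)⌋_T : Fin T`. -/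
def rhoProc {Ω : Type} {MM T : ℕ} [NeZero T] (s : ℕ → Ω → Fin MM) (f : Fin MM → Bool)
    (τ₀ : ℤ) (k : ℕ) (ω : Ω) : Fin T :=
  intToFin T ((k : ℤ) - tauZ s f τ₀ k ω)

/-- The extended process `r̄(k) = (r(k), s(k), σ(k), ρ(k))`. -/
def rbarProc {Ω : Type} {NN MM T : ℕ} [NeZero T] (r : ℕ → Ω → Fin NN)
    (s : ℕ → Ω → Fin MM) (f : Fin MM → Bool) (τ₀ : ℤ) (σ₀ : Fin NN)
    (k : ℕ) (ω : Ω) : XT NN MM T :=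
  (r k ω, s k ω, sigmaProc r s f σ₀ k ω, rhoProc s f τ₀ k ω)

/-- Membership in `𝔛`: if `f(β) = 1` then `α = γ` and `δ = 1` (0-indexed: `δ = 0`). -/
def inX {NN MM T : ℕ} [NeZero T] (f : Fin MM → Bool) (χ : XT NN MM T) : Prop :=
  f χ.2.1 = true → χ.1 = χ.2.2.1 ∧ χ.2.2.2 = 0

/-- The transition probabilities `p̄_{χχ'}` of the extended chain. The condition
`⌊δ' - δ - 1⌋_T = 0` for `δ, δ' ∈ [T]` is, in 0-indexed form, `δ' = δ + 1` in `Fin T`. -/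
def pbar {NN MM T : ℕ} [NeZero T] (P : Matrix (Fin NN) (Fin NN) ℝ)
    (Q : Matrix (Fin MM) (Fin MM) ℝ) (f : Fin MM → Bool) (χ χ' : XT NN MM T) : ℝ :=
  (if f χ'.2.1 = true
    then (if χ'.1 = χ'.2.2.1 ∧ χ'.2.2.2 = 0 then (1 : ℝ) else 0)
    else (if χ'.2.2.1 = χ.2.2.1 ∧ χ'.2.2.2 = χ.2.2.2 + 1 then (1 : ℝ) else 0))
  * P χ.1 χ'.1 * Q χ.2.1 χ'.2.1

/-- The state trajectory of the closed-loop system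
`x(k+1) = A(mode(k)) x(k) + E(mode(k)) w(k)`, `x(0) = x₀`. -/
def traj {Ω S : Type} {n q : ℕ}
    (Amat : S → Matrix (Fin n) (Fin n) ℝ) (Emat : S → Matrix (Fin n) (Fin q) ℝ)
    (mode : ℕ → Ω → S) (w : ℕ → Ω → Fin q → ℝ) (x0 : Fin n → ℝ) : ℕ → Ω → Fin n → ℝ
  | 0, _ => x0
  | (k + 1), ω =>
      (Amat (mode k ω)).mulVec (traj Amat Emat mode w x0 k ω)
        + (Emat (mode k ω)).mulVec (w k ω)

/-- `A_{K,χ} = A_α + B_α K_{γ,δ}`. -/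
def AKmat {NN MM T n m : ℕ} (A : Fin NN → Matrix (Fin n) (Fin n) ℝ)
    (B : Fin NN → Matrix (Fin n) (Fin m) ℝ)
    (K : Fin NN → Fin T → Matrix (Fin m) (Fin n) ℝ) (χ : XT NN MM T) :
    Matrix (Fin n) (Fin n) ℝ :=
  A χ.1 + B χ.1 * K χ.2.2.1 χ.2.2.2

/-- `C_{K,χ} = C_α + D_α K_{γ,δ}`. -/
def CKmat {NN MM T n m ℓ : ℕ} (C : Fin NN → Matrix (Fin ℓ) (Fin n) ℝ)
    (D : Fin NN → Matrix (Fin ℓ) (Fin m) ℝ)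
    (K : Fin NN → Fin T → Matrix (Fin m) (Fin n) ℝ) (χ : XT NN MM T) :
    Matrix (Fin ℓ) (Fin n) ℝ :=
  C χ.1 + D χ.1 * K χ.2.2.1 χ.2.2.2

/-- Squared Euclidean norm of a vector, as an extended nonnegative real. -/
def sqE {d : ℕ} (v : Fin d → ℝ) : ENNReal := ENNReal.ofReal (∑ i, (v i) ^ 2)

-- The operator `D̄_χ(R) = ∑_{χ' ∈ 𝔛} p̄_{χ'χ} R_{χ'}`.
open Classical in
def Dop {NN MM T n : ℕ} [NeZero T] (P : Matrix (Fin NN) (Fin NN) ℝ)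
    (Q : Matrix (Fin MM) (Fin MM) ℝ) (f : Fin MM → Bool)
    (R : XT NN MM T → Matrix (Fin n) (Fin n) ℝ) (χ : XT NN MM T) :
    Matrix (Fin n) (Fin n) ℝ :=
  ∑ χ' : XT NN MM T, if inX f χ' then pbar P Q f χ' χ • R χ' else 0

-- The operator `F̄_χ(Z) = ∑_{χ' ∈ 𝔛} p̄_{χχ'} Z_{χ,χ'}`.
open Classical in
def Fop {NN MM T n : ℕ} [NeZero T] (P : Matrix (Fin NN) (Fin NN) ℝ)
    (Q : Matrix (Fin MM) (Fin MM) ℝ) (f : Fin MM → Bool)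
    (Z : XT NN MM T → XT NN MM T → Matrix (Fin n) (Fin n) ℝ) (χ : XT NN MM T) :
    Matrix (Fin n) (Fin n) ℝ :=
  ∑ χ' : XT NN MM T, if inX f χ' then pbar P Q f χ χ' • Z χ χ' else 0

/-- A pair `(γ,δ) ∈ [N] × [T]` is admissible if `(α,β,γ,δ) ∈ 𝔛` for some `α, β`. -/
def Admissible {NN MM T : ℕ} [NeZero T] (f : Fin MM → Bool) (g : Fin NN) (d : Fin T) : Prop :=
  ∃ (α : Fin NN) (β : Fin MM), inX (T := T) f (α, β, g, d)

/-- A realization, on some probability space, of the pair of independent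
time-homogeneous Markov chains `(r, s)` with transition matrices `P` and `Q`. -/
structure MJLSReal (NN MM : ℕ) (P : Matrix (Fin NN) (Fin NN) ℝ)
    (Q : Matrix (Fin MM) (Fin MM) ℝ) : Type 1 where
  Ω : Type
  inst : MeasurableSpace Ω
  μ : @Measure Ω inst
  prob : IsProbabilityMeasure μ
  r : ℕ → Ω → Fin NN
  s : ℕ → Ω → Fin MM
  meas_r : ∀ k, Measurable[inst] (r k)
  meas_s : ∀ k, Measurable[inst] (s k)
  markov_r : IsMarkovChain μ r fun i j => P i j
  markov_s : IsMarkovChain μ s fun i j => Q i j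
  indep : IndepFun (fun ω l => r l ω) (fun ω l => s l ω) μ

/-- A realization, on some probability space, of a time-homogeneous Markov chain `θ`
taking values in `𝔛` with transition probabilities `p̄`. -/
structure ThetaReal (NN MM T : ℕ) [NeZero T] (P : Matrix (Fin NN) (Fin NN) ℝ)
    (Q : Matrix (Fin MM) (Fin MM) ℝ) (f : Fin MM → Bool) : Type 1 where
  Ω : Type
  inst : MeasurableSpace Ω
  μ : @Measure Ω inst
  prob : IsProbabilityMeasure μ
  θ : ℕ → Ω → XT NN MM T
  meas : ∀ k, Measurable[inst] (θ k)
  mem : ∀ k ω, inX f (θ k ω)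
  markov : IsMarkovChain μ θ (pbar P Q f)

/-- Mean square stability of the closed-loop system `Σ_K`: there are `c > 0` and
`λ ∈ [0,1)` such that for every realization, every deterministic initialization
(`r(0) = r₀`, `s(0) = s₀` a.s., together with `σ₀` and `τ₀ ≤ 0`, so that `r̄(0)`
is a deterministic element of `𝔛`), every `x₀` and every `k`,
`E[‖x(k)‖²] ≤ c λ^k ‖x₀‖²` (with `w ≡ 0`). -/
def MeanSquareStable {NN MM T n m q : ℕ} [NeZero T]
    (P : Matrix (Fin NN) (Fin NN) ℝ) (Qm : Matrix (Fin MM) (Fin MM) ℝ) (f : Fin MM → Bool)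
    (A : Fin NN → Matrix (Fin n) (Fin n) ℝ) (B : Fin NN → Matrix (Fin n) (Fin m) ℝ)
    (E : Fin NN → Matrix (Fin n) (Fin q) ℝ)
    (K : Fin NN → Fin T → Matrix (Fin m) (Fin n) ℝ) : Prop :=
  ∃ c : ℝ, 0 < c ∧ ∃ lam : ℝ, 0 ≤ lam ∧ lam < 1 ∧
    ∀ (S : MJLSReal NN MM P Qm) (τ₀ : ℤ), τ₀ ≤ 0 →
      ∀ (σ₀ r₀ : Fin NN) (s₀ : Fin MM),
        (∀ᵐ ω ∂S.μ, S.r 0 ω = r₀ ∧ S.s 0 ω = s₀) →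
        ∀ (x0 : Fin n → ℝ) (k : ℕ),
          (∫⁻ ω, sqE (traj (AKmat A B K) (fun χ => E χ.1)
              (rbarProc S.r S.s f τ₀ σ₀) (fun _ _ => 0) x0 k ω) ∂S.μ)
            ≤ ENNReal.ofReal (c * lam ^ k * ∑ i, (x0 i) ^ 2)

/-- Mean square stability of `Σ̄_K` (the system driven by the chain `θ`). -/
def MeanSquareStableBar {NN MM T n m q : ℕ} [NeZero T]
    (P : Matrix (Fin NN) (Fin NN) ℝ) (Qm : Matrix (Fin MM) (Fin MM) ℝ) (f : Fin MM → Bool)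
    (A : Fin NN → Matrix (Fin n) (Fin n) ℝ) (B : Fin NN → Matrix (Fin n) (Fin m) ℝ)
    (E : Fin NN → Matrix (Fin n) (Fin q) ℝ)
    (K : Fin NN → Fin T → Matrix (Fin m) (Fin n) ℝ) : Prop :=
  ∃ c : ℝ, 0 < c ∧ ∃ lam : ℝ, 0 ≤ lam ∧ lam < 1 ∧
    ∀ (S : ThetaReal NN MM T P Qm f) (χ : XT NN MM T), inX f χ →
      (∀ᵐ ω ∂S.μ, S.θ 0 ω = χ) →
      ∀ (x0 : Fin n → ℝ) (k : ℕ),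
        (∫⁻ ω, sqE (traj (AKmat A B K) (fun χ' => E χ'.1) S.θ (fun _ _ => 0) x0 k ω) ∂S.μ)
          ≤ ENNReal.ofReal (c * lam ^ k * ∑ i, (x0 i) ^ 2)

/-- The impulse disturbance `w = e_i φ`, i.e. `w(0) = e_i` and `w(k) = 0` for `k ≥ 1`. -/
def impulse {Ω : Type} (q : ℕ) (i : Fin q) : ℕ → Ω → Fin q → ℝ :=
  fun k _ j => if k = 0 ∧ j = i then 1 else 0

/-- `∑_k E[‖z(k; 0, χ, e_i φ)‖²]` for `Σ_K` on a given realization with data `(τ₀, σ₀)`. -/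
def H2TermSigma {NN MM T n m q ℓ : ℕ} [NeZero T]
    {P : Matrix (Fin NN) (Fin NN) ℝ} {Qm : Matrix (Fin MM) (Fin MM) ℝ}
    (S : MJLSReal NN MM P Qm) (f : Fin MM → Bool) (τ₀ : ℤ) (σ₀ : Fin NN)
    (A : Fin NN → Matrix (Fin n) (Fin n) ℝ) (B : Fin NN → Matrix (Fin n) (Fin m) ℝ)
    (C : Fin NN → Matrix (Fin ℓ) (Fin n) ℝ) (D : Fin NN → Matrix (Fin ℓ) (Fin m) ℝ)
    (E : Fin NN → Matrix (Fin n) (Fin q) ℝ)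
    (K : Fin NN → Fin T → Matrix (Fin m) (Fin n) ℝ) (i : Fin q) : ENNReal :=
  ∑' k : ℕ, ∫⁻ ω, sqE ((CKmat C D K (rbarProc S.r S.s f τ₀ σ₀ k ω)).mulVec
      (traj (AKmat A B K) (fun χ => E χ.1) (rbarProc S.r S.s f τ₀ σ₀)
        (impulse q i) 0 k ω)) ∂S.μ

-- `‖Σ_K‖₂² < γ`, where `‖Σ_K‖₂² = ∑_{i=1}^q ∑_{χ ∈ 𝔛} μ̄(χ) ‖z(⬝;0,χ,e_iφ)‖₂²` and the
-- expectations are over arbitrary realizations with deterministic initialization `r̄(0) = χ`.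
open Classical in
def H2SqLtSigma {NN MM T n m q ℓ : ℕ} [NeZero T]
    (P : Matrix (Fin NN) (Fin NN) ℝ) (Qm : Matrix (Fin MM) (Fin MM) ℝ) (f : Fin MM → Bool)
    (A : Fin NN → Matrix (Fin n) (Fin n) ℝ) (B : Fin NN → Matrix (Fin n) (Fin m) ℝ)
    (C : Fin NN → Matrix (Fin ℓ) (Fin n) ℝ) (D : Fin NN → Matrix (Fin ℓ) (Fin m) ℝ)
    (E : Fin NN → Matrix (Fin n) (Fin q) ℝ)
    (K : Fin NN → Fin T → Matrix (Fin m) (Fin n) ℝ)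
    (μbar : XT NN MM T → ℝ) (γ : ℝ) : Prop :=
  ∀ (S : Fin q → XT NN MM T → MJLSReal NN MM P Qm)
    (τ : Fin q → XT NN MM T → ℤ) (σv : Fin q → XT NN MM T → Fin NN),
    (∀ i χ, inX f χ → τ i χ ≤ 0 ∧
        (∀ᵐ ω ∂(S i χ).μ, rbarProc (S i χ).r (S i χ).s f (τ i χ) (σv i χ) 0 ω = χ)) →
    (∑ i : Fin q, ∑ χ : XT NN MM T,
        if inX f χ
        then ENNReal.ofReal (μbar χ) * H2TermSigma (S i χ) f (τ i χ) (σv i χ) A B C D E K i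
        else 0)
      < ENNReal.ofReal γ

/-- `∑_k E[‖z̄(k; 0, χ, e_i φ)‖²]` for `Σ̄_K` on a given realization of `θ`. -/
def H2TermBar {NN MM T n m q ℓ : ℕ} [NeZero T]
    {P : Matrix (Fin NN) (Fin NN) ℝ} {Qm : Matrix (Fin MM) (Fin MM) ℝ} {f : Fin MM → Bool}
    (S : ThetaReal NN MM T P Qm f)
    (A : Fin NN → Matrix (Fin n) (Fin n) ℝ) (B : Fin NN → Matrix (Fin n) (Fin m) ℝ)
    (C : Fin NN → Matrix (Fin ℓ) (Fin n) ℝ) (D : Fin NN → Matrix (Fin ℓ) (Fin m) ℝ)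
    (E : Fin NN → Matrix (Fin n) (Fin q) ℝ)
    (K : Fin NN → Fin T → Matrix (Fin m) (Fin n) ℝ) (i : Fin q) : ENNReal :=
  ∑' k : ℕ, ∫⁻ ω, sqE ((CKmat C D K (S.θ k ω)).mulVec
      (traj (AKmat A B K) (fun χ => E χ.1) S.θ (impulse q i) 0 k ω)) ∂S.μ

-- `‖Σ̄_K‖₂² < γ` (the `H₂` norm of `Σ̄_K`, defined with `θ` in place of `r̄`).
open Classical in
def H2SqLtBar {NN MM T n m q ℓ : ℕ} [NeZero T]
    (P : Matrix (Fin NN) (Fin NN) ℝ) (Qm : Matrix (Fin MM) (Fin MM) ℝ) (f : Fin MM → Bool)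
    (A : Fin NN → Matrix (Fin n) (Fin n) ℝ) (B : Fin NN → Matrix (Fin n) (Fin m) ℝ)
    (C : Fin NN → Matrix (Fin ℓ) (Fin n) ℝ) (D : Fin NN → Matrix (Fin ℓ) (Fin m) ℝ)
    (E : Fin NN → Matrix (Fin n) (Fin q) ℝ)
    (K : Fin NN → Fin T → Matrix (Fin m) (Fin n) ℝ)
    (μbar : XT NN MM T → ℝ) (γ : ℝ) : Prop :=
  ∀ (S : Fin q → XT NN MM T → ThetaReal NN MM T P Qm f),
    (∀ i χ, inX f χ → (∀ᵐ ω ∂(S i χ).μ, (S i χ).θ 0 ω = χ)) →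
    (∑ i : Fin q, ∑ χ : XT NN MM T,
        if inX f χ
        then ENNReal.ofReal (μbar χ) * H2TermBar (S i χ) A B C D E K i
        else 0)
      < ENNReal.ofReal γ

/-- The σ-algebra `Θ_k` generated by `r(0), s(0), …, r(k), s(k)`, for a realization. -/
def sigFiltSigma {NN MM : ℕ} {P : Matrix (Fin NN) (Fin NN) ℝ}
    {Q : Matrix (Fin MM) (Fin MM) ℝ} (S : MJLSReal NN MM P Q) (k : ℕ) :
    MeasurableSpace S.Ω :=
  ⨆ j ∈ Finset.range (k + 1),
    (MeasurableSpace.comap (S.r j) inferInstance ⊔ MeasurableSpace.comap (S.s j) inferInstance)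

/-- The σ-algebra generated by `θ(0), …, θ(k)`, for a realization of `θ`. -/
def sigFiltBar {NN MM T : ℕ} [NeZero T] {P : Matrix (Fin NN) (Fin NN) ℝ}
    {Q : Matrix (Fin MM) (Fin MM) ℝ} {f : Fin MM → Bool} (S : ThetaReal NN MM T P Q f)
    (k : ℕ) : MeasurableSpace S.Ω :=
  ⨆ j ∈ Finset.range (k + 1), MeasurableSpace.comap (S.θ j) inferInstance

/-- `Σ_K` satisfies `‖Σ_K‖∞² < γ`: there is `0 ≤ c < γ` such that `‖z‖₂² ≤ c ‖w‖₂²`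
for every realization, every deterministic initialization `r̄(0) = r̄₀ ∈ 𝔛`, and
every nonzero `w ∈ ℓ²(ℝ^q)` adapted to `(Θ_k)_k` (with `x₀ = 0`). -/
def HinfSqLtSigma {NN MM T n m q ℓ : ℕ} [NeZero T]
    (P : Matrix (Fin NN) (Fin NN) ℝ) (Qm : Matrix (Fin MM) (Fin MM) ℝ) (f : Fin MM → Bool)
    (A : Fin NN → Matrix (Fin n) (Fin n) ℝ) (B : Fin NN → Matrix (Fin n) (Fin m) ℝ)
    (C : Fin NN → Matrix (Fin ℓ) (Fin n) ℝ) (D : Fin NN → Matrix (Fin ℓ) (Fin m) ℝ)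
    (E : Fin NN → Matrix (Fin n) (Fin q) ℝ)
    (K : Fin NN → Fin T → Matrix (Fin m) (Fin n) ℝ) (γ : ℝ) : Prop :=
  ∃ c : ℝ, 0 ≤ c ∧ c < γ ∧
    ∀ (S : MJLSReal NN MM P Qm) (τ₀ : ℤ), τ₀ ≤ 0 → ∀ (σ₀ : Fin NN) (χ : XT NN MM T),
      inX f χ → (∀ᵐ ω ∂S.μ, rbarProc S.r S.s f τ₀ σ₀ 0 ω = χ) →
      ∀ (w : ℕ → S.Ω → Fin q → ℝ),
        (∀ k, Measurable[sigFiltSigma S k] (w k)) →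
        0 < (∑' k : ℕ, ∫⁻ ω, sqE (w k ω) ∂S.μ) →
        (∑' k : ℕ, ∫⁻ ω, sqE (w k ω) ∂S.μ) ≠ ⊤ →
        (∑' k : ℕ, ∫⁻ ω, sqE ((CKmat C D K (rbarProc S.r S.s f τ₀ σ₀ k ω)).mulVec
            (traj (AKmat A B K) (fun χ' => E χ'.1) (rbarProc S.r S.s f τ₀ σ₀) w 0 k ω)) ∂S.μ)
          ≤ ENNReal.ofReal c * (∑' k : ℕ, ∫⁻ ω, sqE (w k ω) ∂S.μ)

/-- `Σ̄_K` satisfies `‖Σ̄_K‖∞² < γ` (disturbances adapted to the filtration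
generated by `θ`). -/
def HinfSqLtBar {NN MM T n m q ℓ : ℕ} [NeZero T]
    (P : Matrix (Fin NN) (Fin NN) ℝ) (Qm : Matrix (Fin MM) (Fin MM) ℝ) (f : Fin MM → Bool)
    (A : Fin NN → Matrix (Fin n) (Fin n) ℝ) (B : Fin NN → Matrix (Fin n) (Fin m) ℝ)
    (C : Fin NN → Matrix (Fin ℓ) (Fin n) ℝ) (D : Fin NN → Matrix (Fin ℓ) (Fin m) ℝ)
    (E : Fin NN → Matrix (Fin n) (Fin q) ℝ)
    (K : Fin NN → Fin T → Matrix (Fin m) (Fin n) ℝ) (γ : ℝ) : Prop :=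
  ∃ c : ℝ, 0 ≤ c ∧ c < γ ∧
    ∀ (S : ThetaReal NN MM T P Qm f) (χ : XT NN MM T),
      inX f χ → (∀ᵐ ω ∂S.μ, S.θ 0 ω = χ) →
      ∀ (w : ℕ → S.Ω → Fin q → ℝ),
        (∀ k, Measurable[sigFiltBar S k] (w k)) →
        0 < (∑' k : ℕ, ∫⁻ ω, sqE (w k ω) ∂S.μ) →
        (∑' k : ℕ, ∫⁻ ω, sqE (w k ω) ∂S.μ) ≠ ⊤ →
        (∑' k : ℕ, ∫⁻ ω, sqE ((CKmat C D K (S.θ k ω)).mulVec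
            (traj (AKmat A B K) (fun χ' => E χ'.1) S.θ w 0 k ω)) ∂S.μ)
          ≤ ENNReal.ofReal c * (∑' k : ℕ, ∫⁻ ω, sqE (w k ω) ∂S.μ)

/-- The symmetric 4×4 block matrix appearing in the `H∞` LMI, with diagonal blocks
`D1, γ I_q, D3, I_ℓ`, sub-diagonal blocks `(3,1) = B31`, `(3,2) = B32`, `(4,1) = B41`,
the corresponding transposed blocks above the diagonal, and zeros elsewhere. -/
def hinfBlock {n q ℓ : ℕ} (γ : ℝ) (D1 D3 : Matrix (Fin n) (Fin n) ℝ)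
    (B31 : Matrix (Fin n) (Fin n) ℝ) (B32 : Matrix (Fin n) (Fin q) ℝ)
    (B41 : Matrix (Fin ℓ) (Fin n) ℝ) :
    Matrix ((Fin n ⊕ Fin q) ⊕ (Fin n ⊕ Fin ℓ)) ((Fin n ⊕ Fin q) ⊕ (Fin n ⊕ Fin ℓ)) ℝ :=
  Matrix.fromBlocks
    (Matrix.fromBlocks D1 0 0 (γ • (1 : Matrix (Fin q) (Fin q) ℝ)))
    (Matrix.fromBlocks B31ᵀ B41ᵀ B32ᵀ 0)
    (Matrix.fromBlocks B31 B32 B41 0)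
    (Matrix.fromBlocks D3 0 0 (1 : Matrix (Fin ℓ) (Fin ℓ) ℝ))

/-
Since `K G = F`, compressing the LMIs by `[I, -(A + B K)]` and `[I, -(C + D K)]` cancels `G` and
leaves the Stein inequality `μ̄ E Eᵀ + 𝓣 R < R` and `C_K D̄(R) C_Kᵀ < W`, where
`(𝓣 X) χ' = A_K χ' (∑ χ, p̄ χ χ' X χ) (A_K χ')ᵀ`. By the Markov property of `r̄`, the operator `𝓣`
propagates the second moment of the state split by mode, so `E ‖x (k + 1)‖²` is the total trace of
`𝓣 ^ k` at a rank-one family. As `𝓣` preserves the Loewner order, `𝓣 R ≤ (1 - ε) R` gives geometric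
decay, and `Y + 𝓣 R ≤ R` with `Y = μ̄ E Eᵀ` gives `∑ k, 𝓣 ^ k Y ≤ R`, hence `‖Σ_K‖₂² ≤ ∑ tr W`.
-/

section LinearMatrixInequality

variable {R ι κ : Type*}

section Congruence

variable [Fintype κ] [Ring R] [StarRing R] {M : Matrix ι ι R} {C : Matrix ι κ R}
  {G X : Matrix κ κ R}

lemma fromCols_mul_fromBlocks_mul_conjTranspose [Fintype ι] [DecidableEq ι] :
    fromCols (1 : Matrix ι ι R) (-C) * fromBlocks M (C * G) (C * G)ᴴ (G + Gᴴ - X) *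
      (fromCols (1 : Matrix ι ι R) (-C))ᴴ = M - C * X * Cᴴ := by
  rw [conjTranspose_fromCols_eq_fromRows_conjTranspose, fromCols_mul_fromBlocks,
    fromCols_mul_fromRows]
  simp only [conjTranspose_one, conjTranspose_neg, conjTranspose_mul, Matrix.mul_add,
    Matrix.add_mul, Matrix.mul_sub, Matrix.sub_mul, Matrix.neg_mul, Matrix.mul_neg,
    Matrix.one_mul, Matrix.mul_one, Matrix.mul_assoc]
  abel

variable [PartialOrder R] [Finite ι]

lemma posSemidef_sub_of_fromBlocks
    (h : (fromBlocks M (C * G) (C * G)ᴴ (G + Gᴴ - X)).PosSemidef) :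
    (M - C * X * Cᴴ).PosSemidef := by
  classical
  cases nonempty_fintype ι
  rw [← fromCols_mul_fromBlocks_mul_conjTranspose]
  exact h.mul_mul_conjTranspose_same _

lemma posDef_sub_of_fromBlocks
    (h : (fromBlocks M (C * G) (C * G)ᴴ (G + Gᴴ - X)).PosDef) :
    (M - C * X * Cᴴ).PosDef := by
  classical
  cases nonempty_fintype ι
  rw [← fromCols_mul_fromBlocks_mul_conjTranspose]
  refine h.mul_mul_conjTranspose_same fun u v huv ↦ ?_
  simp only [vecMul_fromCols, vecMul_one] at huv
  exact (Sum.elim_eq_iff.mp huv).1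

end Congruence

lemma posDef₁₁_of_fromBlocks [Ring R] [StarRing R] [PartialOrder R] {A : Matrix ι ι R}
    {B : Matrix ι κ R} {C : Matrix κ ι R} {D : Matrix κ κ R} (h : (fromBlocks A B C D).PosDef) :
    A.PosDef :=
  h.submatrix Sum.inl_injective

lemma posDef₂₂_of_fromBlocks [Ring R] [StarRing R] [PartialOrder R] {A : Matrix ι ι R}
    {B : Matrix ι κ R} {C : Matrix κ ι R} {D : Matrix κ κ R} (h : (fromBlocks A B C D).PosDef) :
    D.PosDef :=
  h.submatrix Sum.inr_injective

lemma isUnit_of_posDef_add_conjTranspose [Fintype κ] [DecidableEq κ] [Field R] [StarRing R]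
    [PartialOrder R] {G : Matrix κ κ R} (h : (G + Gᴴ).PosDef) : IsUnit G := by
  rw [← mulVec_injective_iff_isUnit, ← coe_mulVecLin, injective_iff_map_eq_zero]
  intro v hv
  rw [mulVecLin_apply] at hv
  by_contra hv₀
  have hpos := h.dotProduct_mulVec_pos hv₀
  rw [add_mulVec, hv, zero_add, dotProduct_mulVec, ← star_mulVec, hv, star_zero,
    zero_dotProduct] at hpos
  exact hpos.false

lemma posDef_of_sub_smul_mul_transpose [Finite ι] [Fintype κ] {M : Matrix ι ι ℝ}
    {E : Matrix ι κ ℝ} {a : ℝ} (ha : 0 ≤ a) (h : (M - a • (E * Eᵀ)).PosDef) : M.PosDef := by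
  have hE : (a • (E * Eᵀ)).PosSemidef := by
    simpa using (posSemidef_self_mul_conjTranspose E).smul ha
  simpa using h.add_posSemidef hE

end LinearMatrixInequality

section LoewnerOrder

open scoped ComplexOrder MatrixOrder Topology
open Filter

variable {𝕜 n : Type*} [RCLike 𝕜] {M N : Matrix n n 𝕜}

lemma exists_pos_smul_one_le [Finite n] [DecidableEq n] (hM : M.PosDef) :
    ∃ r : ℝ, 0 < r ∧ r • 1 ≤ M := by
  cases nonempty_fintype n
  cases isEmpty_or_nonempty n
  · exact ⟨1, one_pos, (Subsingleton.elim _ _).le⟩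
  · simp only [← Algebra.algebraMap_eq_smul_one]
    exact (CFC.exists_pos_algebraMap_le_iff hM.isHermitian.isSelfAdjoint).2
      fun x hx ↦ (isStrictlyPositive_iff_posDef.2 hM).spectrum_pos hx

lemma le_sum_eigenvalues_smul_one [Fintype n] [DecidableEq n] (hN : N.PosSemidef) :
    N ≤ (∑ i, hN.isHermitian.eigenvalues i) • 1 := by
  rw [← Algebra.algebraMap_eq_smul_one]
  refine le_algebraMap_of_spectrum_le (fun x hx ↦ ?_) hN.isHermitian.isSelfAdjoint
  rw [hN.isHermitian.spectrum_real_eq_range_eigenvalues] at hx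
  obtain ⟨i, rfl⟩ := hx
  exact Finset.single_le_sum (fun j _ ↦ hN.eigenvalues_nonneg j) (Finset.mem_univ i)

lemma eventually_smul_le [Finite n] (hM : M.PosDef) (hN : N.PosSemidef) :
    ∀ᶠ ε : ℝ in 𝓝[>] 0, ε • N ≤ M := by
  classical
  cases nonempty_fintype n
  obtain ⟨r, hr, hrM⟩ := exists_pos_smul_one_le hM
  have hsmall : ∀ᶠ ε : ℝ in 𝓝[>] 0, ε * ∑ i, hN.isHermitian.eigenvalues i < r := by
    refine nhdsWithin_le_nhds (((continuous_mul_const _).tendsto' 0 0 ?_).eventually_lt_const hr)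
    exact zero_mul _
  filter_upwards [hsmall, self_mem_nhdsWithin] with ε hε hε₀
  calc ε • N ≤ ε • (∑ i, hN.isHermitian.eigenvalues i) • 1 :=
        smul_le_smul_of_nonneg_left (le_sum_eigenvalues_smul_one hN) (le_of_lt hε₀)
    _ ≤ r • 1 := by
        rw [smul_smul]
        exact smul_le_smul_of_nonneg_right hε.le (nonneg_iff_posSemidef.2 .one)
    _ ≤ M := hrM

lemma vecMulVec_self_le [Fintype n] [DecidableEq n] (x : n → ℝ) :
    vecMulVec x x ≤ (x ⬝ᵥ x) • (1 : Matrix n n ℝ) := by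
  have hpsd : (vecMulVec x x).PosSemidef := by simpa using posSemidef_vecMulVec_self_star x
  have htrace := hpsd.isHermitian.trace_eq_sum_eigenvalues
  rw [trace_vecMulVec] at htrace
  simpa [htrace] using le_sum_eigenvalues_smul_one hpsd

lemma vecMulVec_mulVec_self_le {l : Type*} [Finite l] [Fintype n] (A : Matrix l n ℝ) (x : n → ℝ) :
    vecMulVec (A *ᵥ x) (A *ᵥ x) ≤ (x ⬝ᵥ x) • (A * Aᵀ) := by
  classical
  have hconj := (le_iff.1 (vecMulVec_self_le x)).mul_mul_conjTranspose_same A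
  rwa [conjTranspose_eq_transpose_of_trivial, Matrix.mul_sub, Matrix.sub_mul, Matrix.mul_smul,
    Matrix.smul_mul, Matrix.mul_one, mul_vecMulVec, vecMulVec_mul, vecMul_transpose] at hconj

end LoewnerOrder

section MonotoneEndomorphism

variable {V : Type*} [AddCommGroup V] [PartialOrder V] [Module ℝ V] {L : Module.End ℝ V}

lemma pow_apply_nonneg (hL : Monotone L) {Y : V} (hY : 0 ≤ Y) (k : ℕ) : 0 ≤ (L ^ k) Y := by
  rw [Module.End.coe_pow, ← map_zero (L ^ k), Module.End.coe_pow]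
  exact hL.iterate k hY

lemma pow_apply_le_geometric_smul [PosSMulMono ℝ V] (hL : Monotone L) {R Y : V} {c lam : ℝ}
    (hc : 0 ≤ c) (hlam : 0 ≤ lam) (hR : L R ≤ lam • R) (hY : Y ≤ c • R) (k : ℕ) :
    (L ^ k) Y ≤ (c * lam ^ k) • R := by
  induction k with
  | zero => simpa using hY
  | succ k ih =>
    calc (L ^ (k + 1)) Y = L ((L ^ k) Y) := by rw [pow_succ', Module.End.mul_apply]
      _ ≤ L ((c * lam ^ k) • R) := hL ih
      _ = (c * lam ^ k) • L R := map_smul _ _ _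
      _ ≤ (c * lam ^ k) • lam • R := smul_le_smul_of_nonneg_left hR (by positivity)
      _ = (c * lam ^ (k + 1)) • R := by rw [smul_smul, pow_succ, mul_assoc]

variable [IsOrderedAddMonoid V]

lemma sum_pow_apply_le (hL : Monotone L) {R Y : V} (hR : 0 ≤ R) (hY : Y + L R ≤ R) (k : ℕ) :
    ∑ j ∈ Finset.range k, (L ^ j) Y ≤ R := by
  induction k with
  | zero => simpa using hR
  | succ k ih =>
    calc ∑ j ∈ Finset.range (k + 1), (L ^ j) Y
        = Y + L (∑ j ∈ Finset.range k, (L ^ j) Y) := by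
          rw [Finset.sum_range_succ', add_comm, map_sum]
          simp only [pow_zero, Module.End.one_apply, pow_succ', Module.End.mul_apply]
      _ ≤ Y + L R := by gcongr; exact hL ih
      _ ≤ R := hY

lemma tsum_ofReal_apply_pow_le (hL : Monotone L) {φ : V →ₗ[ℝ] ℝ} (hφ : Monotone φ) {R Y : V}
    (hR : 0 ≤ R) (hY₀ : 0 ≤ Y) (hY : Y + L R ≤ R) :
    ∑' k, ENNReal.ofReal (φ ((L ^ k) Y)) ≤ ENNReal.ofReal (φ R) := by
  refine ENNReal.tsum_le_of_sum_range_le fun k ↦ ?_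
  have hφ₀ : ∀ j ∈ Finset.range k, 0 ≤ φ ((L ^ j) Y) := fun j _ ↦ by
    simpa using hφ (pow_apply_nonneg hL hY₀ j)
  rw [← ENNReal.ofReal_sum_of_nonneg hφ₀, ← map_sum]
  exact ENNReal.ofReal_le_ofReal (hφ (sum_pow_apply_le hL hR hY k))

lemma sum_mul_tsum_ofReal_apply_pow_le [PosSMulMono ℝ V] (hL : Monotone L) {φ : V →ₗ[ℝ] ℝ}
    (hφ : Monotone φ) {κ : Type*} [Fintype κ] {a : κ → ℝ} {Y : κ → V} {R : V} (ha : 0 ≤ a)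
    (hY₀ : 0 ≤ Y) (hR : 0 ≤ R) (hY : ∑ i, a i • Y i + L R ≤ R) :
    ∑ i, ENNReal.ofReal (a i) * ∑' k, ENNReal.ofReal (φ ((L ^ k) (Y i))) ≤
      ENNReal.ofReal (φ R) := by
  have hφ₀ (i : κ) (k : ℕ) : 0 ≤ a i * φ ((L ^ k) (Y i)) :=
    mul_nonneg (ha i) (by simpa using hφ (pow_apply_nonneg hL (hY₀ i) k))
  calc ∑ i, ENNReal.ofReal (a i) * ∑' k, ENNReal.ofReal (φ ((L ^ k) (Y i)))
      = ∑' k, ∑ i, ENNReal.ofReal (a i * φ ((L ^ k) (Y i))) := by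
        rw [Summable.tsum_finsetSum fun _ _ ↦ ENNReal.summable]
        simp only [← ENNReal.tsum_mul_left, ENNReal.ofReal_mul (ha _)]
    _ = ∑' k, ENNReal.ofReal (φ ((L ^ k) (∑ i, a i • Y i))) := by
        simp only [map_sum, map_smul, smul_eq_mul,
          ENNReal.ofReal_sum_of_nonneg fun i _ ↦ hφ₀ i _]
    _ ≤ ENNReal.ofReal (φ R) := tsum_ofReal_apply_pow_le hL hφ hR
        (Finset.sum_nonneg fun i _ ↦ smul_nonneg (ha i) (hY₀ i)) hY

end MonotoneEndomorphism

section SecondMoment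

open scoped MatrixOrder Topology

variable {ι l n : Type*} {p : ι → ι → ℝ}

/-- The second moment, split by mode, of a vector `v` that is deterministic in mode `χ`. -/
def rankOneAt [DecidableEq ι] (χ : ι) (v : n → ℝ) : ι → Matrix n n ℝ :=
  Pi.single χ (vecMulVec v v)

lemma rankOneAt_nonneg [Finite n] [DecidableEq ι] (χ : ι) (v : n → ℝ) : 0 ≤ rankOneAt χ v :=
  Pi.single_nonneg.2 <| nonneg_iff_posSemidef.2 <| by simpa using posSemidef_vecMulVec_self_star v

lemma rankOneAt_mulVec_le [Finite l] [Fintype n] [DecidableEq ι] {A : ι → Matrix l n ℝ}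
    {R : ι → Matrix l l ℝ} {c : ℝ} (hR : 0 ≤ R) (hA : ∀ χ, A χ * (A χ)ᵀ ≤ c • R χ) (hc : 0 ≤ c)
    (χ : ι) (x : n → ℝ) : rankOneAt χ (A χ *ᵥ x) ≤ (c * (x ⬝ᵥ x)) • R := by
  cases nonempty_fintype l
  have hx : 0 ≤ x ⬝ᵥ x := by simpa using dotProduct_star_self_nonneg x
  refine update_le_iff.2 ⟨?_, fun χ' _ ↦ smul_nonneg (mul_nonneg hc hx) (hR χ')⟩
  calc vecMulVec (A χ *ᵥ x) (A χ *ᵥ x) ≤ (x ⬝ᵥ x) • (A χ * (A χ)ᵀ) :=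
        vecMulVec_mulVec_self_le (A χ) x
    _ ≤ (x ⬝ᵥ x) • c • R χ := smul_le_smul_of_nonneg_left (hA χ) hx
    _ = (c * (x ⬝ᵥ x)) • R χ := by rw [smul_smul, mul_comm]

variable [Fintype ι]

lemma sum_smul_rankOneAt_col [DecidableEq ι] [Fintype l] (m : ι → ℝ) (E : ι → Matrix n l ℝ) :
    ∑ i : l × ι, m i.2 • rankOneAt i.2 ((E i.2).col i.1) = fun χ ↦ m χ • (E χ * (E χ)ᵀ) := by
  funext χ
  rw [Fintype.sum_prod_type, Finset.sum_apply]
  have hmode (i : l) : (∑ χ', m χ' • rankOneAt χ' ((E χ').col i)) χ =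
      m χ • vecMulVec ((E χ).col i) ((E χ).col i) := by
    rw [Finset.sum_apply, Finset.sum_eq_single χ (fun χ' _ h ↦ by simp [rankOneAt, h.symm])
      (by simp)]
    simp [rankOneAt]
  simp only [hmode, ← Finset.smul_sum]
  congr 1
  ext a b
  simp [Matrix.mul_apply, Matrix.sum_apply, vecMulVec_apply]

/-- The adjoint of `secondMomentStep` for the trace pairing. -/
def secondMomentDual [Fintype l] (p : ι → ι → ℝ) (C : ι → Matrix l n ℝ)
    (Z : ι → Matrix l l ℝ) (χ : ι) : Matrix n n ℝ :=
  ∑ χ', p χ χ' • ((C χ')ᵀ * Z χ' * C χ')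

lemma secondMomentDual_posSemidef [Finite n] [Fintype l] (hp : 0 ≤ p) (C : ι → Matrix l n ℝ)
    {Z : ι → Matrix l l ℝ} (hZ : ∀ χ, (Z χ).PosSemidef) (χ : ι) :
    (secondMomentDual p C Z χ).PosSemidef :=
  posSemidef_sum _ fun χ' _ ↦ by
    rw [← conjTranspose_eq_transpose_of_trivial]
    exact ((hZ χ').conjTranspose_mul_mul_same (C χ')).smul (hp χ χ')

variable [Fintype n]

/-- The total trace of a family of matrices: applied to a second moment split by mode, it gives the
expected squared norm. -/
def traceSum : (ι → Matrix n n ℝ) →ₗ[ℝ] ℝ :=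
  ∑ χ, traceLinearMap n ℝ ℝ ∘ₗ LinearMap.proj χ

@[simp]
lemma traceSum_apply (X : ι → Matrix n n ℝ) : traceSum X = ∑ χ, (X χ).trace := by
  simp [traceSum]

lemma traceSum_monotone : Monotone (traceSum : (ι → Matrix n n ℝ) →ₗ[ℝ] ℝ) := fun X Y hXY ↦ by
  simp only [traceSum_apply]
  exact Finset.sum_le_sum fun χ _ ↦ (tracePositiveLinearMap n ℝ ℝ).monotone' (hXY χ)

/-- If `X χ` is the second moment of a random vector `x` on the event that a chain with transition
weights `p` is in mode `χ`, then the value at `χ'` is the second moment of `C χ' *ᵥ x` on the event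
that the next mode is `χ'`. -/
def secondMomentStep (p : ι → ι → ℝ) (C : ι → Matrix l n ℝ) :
    (ι → Matrix n n ℝ) →ₗ[ℝ] (ι → Matrix l l ℝ) where
  toFun X χ' := C χ' * (∑ χ, p χ χ' • X χ) * (C χ')ᵀ
  map_add' X Y := by
    funext χ'
    simp only [Pi.add_apply, smul_add, Finset.sum_add_distrib, Matrix.mul_add, Matrix.add_mul]
  map_smul' c X := by
    funext χ'
    simp only [Pi.smul_apply, smul_comm _ c, ← Finset.smul_sum, Matrix.mul_smul, Matrix.smul_mul,
      RingHom.id_apply]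

lemma secondMomentStep_apply (p : ι → ι → ℝ) (C : ι → Matrix l n ℝ) (X : ι → Matrix n n ℝ)
    (χ' : ι) : secondMomentStep p C X χ' = C χ' * (∑ χ, p χ χ' • X χ) * (C χ')ᵀ := rfl

lemma secondMomentStep_monotone [Finite l] (hp : 0 ≤ p) (C : ι → Matrix l n ℝ) :
    Monotone (secondMomentStep p C) := fun X Y hXY χ' ↦ by
  have hsum : ∑ χ, p χ χ' • X χ ≤ ∑ χ, p χ χ' • Y χ :=
    Finset.sum_le_sum fun χ _ ↦ smul_le_smul_of_nonneg_left (hXY χ) (hp χ χ')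
  rw [le_iff, secondMomentStep_apply, secondMomentStep_apply, ← Matrix.sub_mul, ← Matrix.mul_sub,
    ← conjTranspose_eq_transpose_of_trivial]
  exact (le_iff.1 hsum).mul_mul_conjTranspose_same _

lemma sum_trace_mul_secondMomentStep [Fintype l] (C : ι → Matrix l n ℝ) (Z : ι → Matrix l l ℝ)
    (X : ι → Matrix n n ℝ) :
    ∑ χ', (Z χ' * secondMomentStep p C X χ').trace =
      ∑ χ, (secondMomentDual p C Z χ * X χ).trace := by
  simp only [secondMomentStep_apply, secondMomentDual, Matrix.mul_sum, Matrix.sum_mul, trace_sum]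
  rw [Finset.sum_comm]
  refine Finset.sum_congr rfl fun χ _ ↦ Finset.sum_congr rfl fun χ' _ ↦ ?_
  simp only [Matrix.mul_smul, Matrix.smul_mul, trace_smul]
  rw [← Matrix.mul_assoc, trace_mul_comm, ← Matrix.mul_assoc, ← Matrix.mul_assoc]

lemma ofReal_dotProduct_secondMomentDual [Fintype l] (hp : 0 ≤ p) (C : ι → Matrix l n ℝ)
    {Z : ι → Matrix l l ℝ} (hZ : ∀ χ, (Z χ).PosSemidef) (χ : ι) (x : n → ℝ) :
    ENNReal.ofReal (x ⬝ᵥ secondMomentDual p C Z χ *ᵥ x) =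
      ∑ χ', ENNReal.ofReal (p χ χ') *
        ENNReal.ofReal ((C χ' *ᵥ x) ⬝ᵥ Z χ' *ᵥ (C χ' *ᵥ x)) := by
  have hZ₀ (χ' : ι) : 0 ≤ (C χ' *ᵥ x) ⬝ᵥ Z χ' *ᵥ (C χ' *ᵥ x) := by
    simpa using (hZ χ').dotProduct_mulVec_nonneg (C χ' *ᵥ x)
  simp only [← ENNReal.ofReal_mul (hp χ _)]
  rw [← ENNReal.ofReal_sum_of_nonneg fun χ' _ ↦ mul_nonneg (hp χ χ') (hZ₀ χ')]
  simp only [secondMomentDual, sum_mulVec, smul_mulVec, dotProduct_sum, dotProduct_smul,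
    smul_eq_mul, ← mulVec_mulVec, dotProduct_mulVec x, vecMul_transpose]

lemma sum_trace_mul_rankOneAt [DecidableEq ι] (Z : ι → Matrix n n ℝ) (χ : ι) (x : n → ℝ) :
    ∑ χ', (Z χ' * rankOneAt χ x χ').trace = x ⬝ᵥ Z χ *ᵥ x := by
  rw [Finset.sum_eq_single χ (fun χ' _ h ↦ by simp [rankOneAt, h]) (by simp)]
  rw [rankOneAt, Pi.single_eq_same, mul_vecMulVec, trace_vecMulVec, dotProduct_comm]

lemma exists_geometric_bound_of_posDef_sub [DecidableEq ι] {A R : ι → Matrix n n ℝ} (hp : 0 ≤ p)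
    (hR : ∀ χ, (R χ).PosDef) (hstein : ∀ χ, (R χ - secondMomentStep p A R χ).PosDef) :
    ∃ c lam : ℝ, 0 ≤ c ∧ 0 < lam ∧ lam < 1 ∧ ∀ χ x k,
      traceSum ((secondMomentStep p A ^ k) (rankOneAt χ (A χ *ᵥ x))) ≤ c * lam ^ k * (x ⬝ᵥ x) := by
  have hdecay : ∀ᶠ ε : ℝ in 𝓝[>] 0, ∀ χ, ε • R χ ≤ R χ - secondMomentStep p A R χ :=
    Filter.eventually_all.2 fun χ ↦ eventually_smul_le (hstein χ) (hR χ).posSemidef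
  have hinit : ∀ᶠ ε : ℝ in 𝓝[>] 0, ∀ χ, ε • (A χ * (A χ)ᵀ) ≤ R χ :=
    Filter.eventually_all.2 fun χ ↦ eventually_smul_le (hR χ) <| by
      simpa using posSemidef_self_mul_conjTranspose (A χ)
  have hIoo : ∀ᶠ ε : ℝ in 𝓝[>] 0, ε ∈ Set.Ioo 0 1 := Ioo_mem_nhdsGT one_pos
  obtain ⟨ε, ⟨hε₀, hε₁⟩, hdecay, hinit⟩ := (hIoo.and (hdecay.and hinit)).exists
  have hRnn : 0 ≤ R := fun χ ↦ nonneg_iff_posSemidef.2 (hR χ).posSemidef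
  have hstep : secondMomentStep p A R ≤ (1 - ε) • R := fun χ ↦ by
    rw [Pi.smul_apply, sub_smul, one_smul]
    exact le_sub_comm.1 (hdecay χ)
  have hA (χ : ι) : A χ * (A χ)ᵀ ≤ ε⁻¹ • R χ := (le_inv_smul_iff_of_pos hε₀).2 (hinit χ)
  have htr : 0 ≤ traceSum R := by simpa using traceSum_monotone hRnn
  refine ⟨ε⁻¹ * traceSum R, 1 - ε, by positivity, by linarith, by linarith, fun χ x k ↦ ?_⟩
  have hx : 0 ≤ x ⬝ᵥ x := by simpa using dotProduct_star_self_nonneg x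
  calc traceSum ((secondMomentStep p A ^ k) (rankOneAt χ (A χ *ᵥ x)))
      ≤ traceSum ((ε⁻¹ * (x ⬝ᵥ x) * (1 - ε) ^ k) • R) :=
        traceSum_monotone <| pow_apply_le_geometric_smul (secondMomentStep_monotone hp A)
          (by positivity) (by linarith) hstep
          (rankOneAt_mulVec_le hRnn hA (by positivity) χ x) k
    _ = ε⁻¹ * traceSum R * (1 - ε) ^ k * (x ⬝ᵥ x) := by rw [map_smul, smul_eq_mul]; ring

end SecondMoment

section MarkovDriven

open scoped MatrixOrder

variable {Ω ι n : Type*} [MeasurableSpace Ω] [Fintype ι]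

/-- The Markov property of `θ` relative to `y`, with transition weights `p`: given `θ k` and
`y k`, the law of `θ (k + 1)` is `p (θ k)`. Since `Φ` need not be measurable, this is only
meaningful when `y k` is a function of a finite-valued history. -/
def IsMarkovDriven {V : Type*} (μ : Measure Ω) (p : ι → ι → ℝ) (θ : ℕ → Ω → ι) (y : ℕ → Ω → V) :
    Prop :=
  ∀ (k : ℕ) (Φ : ι → V → ENNReal), ∫⁻ ω, Φ (θ (k + 1) ω) (y k ω) ∂μ =
    ∫⁻ ω, ∑ χ, ENNReal.ofReal (p (θ k ω) χ) * Φ χ (y k ω) ∂μ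

variable [Fintype n] [DecidableEq ι] {μ : Measure Ω} {p : ι → ι → ℝ} {θ : ℕ → Ω → ι}
  {y : ℕ → Ω → n → ℝ} {A : ι → Matrix n n ℝ} {χ₀ : ι} {y₀ : n → ℝ}

namespace IsMarkovDriven

lemma lintegral_dotProduct_mulVec [IsProbabilityMeasure μ] (h : IsMarkovDriven μ p θ y)
    (hp : 0 ≤ p) (hy : ∀ k ω, y (k + 1) ω = A (θ (k + 1) ω) *ᵥ y k ω)
    (h₀ : ∀ᵐ ω ∂μ, θ 0 ω = χ₀ ∧ y 0 ω = y₀) (k : ℕ) {Z : ι → Matrix n n ℝ}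
    (hZ : ∀ χ, (Z χ).PosSemidef) :
    ∫⁻ ω, ENNReal.ofReal (y k ω ⬝ᵥ Z (θ k ω) *ᵥ y k ω) ∂μ =
      ENNReal.ofReal (∑ χ, (Z χ * (secondMomentStep p A ^ k) (rankOneAt χ₀ y₀) χ).trace) := by
  induction k generalizing Z with
  | zero =>
    calc ∫⁻ ω, ENNReal.ofReal (y 0 ω ⬝ᵥ Z (θ 0 ω) *ᵥ y 0 ω) ∂μ
        = ∫⁻ _, ENNReal.ofReal (y₀ ⬝ᵥ Z χ₀ *ᵥ y₀) ∂μ :=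
          lintegral_congr_ae <| h₀.mono fun ω hω ↦ by simp only [hω]
      _ = ENNReal.ofReal (∑ χ, (Z χ * (secondMomentStep p A ^ 0) (rankOneAt χ₀ y₀) χ).trace) := by
          rw [lintegral_const, measure_univ, mul_one, pow_zero, Module.End.one_apply,
            sum_trace_mul_rankOneAt]
  | succ k ih =>
    calc ∫⁻ ω, ENNReal.ofReal (y (k + 1) ω ⬝ᵥ Z (θ (k + 1) ω) *ᵥ y (k + 1) ω) ∂μ
        = ∫⁻ ω, ENNReal.ofReal (y k ω ⬝ᵥ secondMomentDual p A Z (θ k ω) *ᵥ y k ω) ∂μ := by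
          simp only [hy, ofReal_dotProduct_secondMomentDual hp A hZ]
          exact h k fun χ v ↦ ENNReal.ofReal ((A χ *ᵥ v) ⬝ᵥ Z χ *ᵥ (A χ *ᵥ v))
      _ = ENNReal.ofReal (∑ χ, (secondMomentDual p A Z χ *
            (secondMomentStep p A ^ k) (rankOneAt χ₀ y₀) χ).trace) :=
          ih (secondMomentDual_posSemidef hp A hZ)
      _ = ENNReal.ofReal (∑ χ, (Z χ *
            (secondMomentStep p A ^ (k + 1)) (rankOneAt χ₀ y₀) χ).trace) := by
          rw [pow_succ', Module.End.mul_apply, sum_trace_mul_secondMomentStep]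

lemma lintegral_dotProduct_self [IsProbabilityMeasure μ] (h : IsMarkovDriven μ p θ y)
    (hp : 0 ≤ p) (hy : ∀ k ω, y (k + 1) ω = A (θ (k + 1) ω) *ᵥ y k ω)
    (h₀ : ∀ᵐ ω ∂μ, θ 0 ω = χ₀ ∧ y 0 ω = y₀) (k : ℕ) :
    ∫⁻ ω, ENNReal.ofReal (y k ω ⬝ᵥ y k ω) ∂μ =
      ENNReal.ofReal (traceSum ((secondMomentStep p A ^ k) (rankOneAt χ₀ y₀))) := by
  classical
  simpa using h.lintegral_dotProduct_mulVec hp hy h₀ k (Z := fun _ ↦ 1) fun _ ↦ .one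

lemma lintegral_output_dotProduct_self [IsProbabilityMeasure μ] {l : Type*} [Fintype l]
    (h : IsMarkovDriven μ p θ y) (hp : 0 ≤ p)
    (hy : ∀ k ω, y (k + 1) ω = A (θ (k + 1) ω) *ᵥ y k ω)
    (h₀ : ∀ᵐ ω ∂μ, θ 0 ω = χ₀ ∧ y 0 ω = y₀) (C : ι → Matrix l n ℝ) (k : ℕ) :
    ∫⁻ ω, ENNReal.ofReal ((C (θ (k + 1) ω) *ᵥ y k ω) ⬝ᵥ (C (θ (k + 1) ω) *ᵥ y k ω)) ∂μ =
      ENNReal.ofReal (traceSum (secondMomentStep p C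
        ((secondMomentStep p A ^ k) (rankOneAt χ₀ y₀)))) := by
  classical
  have hone (_ : ι) : (1 : Matrix l l ℝ).PosSemidef := .one
  calc ∫⁻ ω, ENNReal.ofReal ((C (θ (k + 1) ω) *ᵥ y k ω) ⬝ᵥ (C (θ (k + 1) ω) *ᵥ y k ω)) ∂μ
      = ∫⁻ ω, ENNReal.ofReal (y k ω ⬝ᵥ secondMomentDual p C (fun _ ↦ 1) (θ k ω) *ᵥ y k ω) ∂μ := by
        simp only [ofReal_dotProduct_secondMomentDual hp C hone, one_mulVec]
        exact h k fun χ v ↦ ENNReal.ofReal ((C χ *ᵥ v) ⬝ᵥ (C χ *ᵥ v))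
    _ = ENNReal.ofReal (∑ χ, (1 * secondMomentStep p C
          ((secondMomentStep p A ^ k) (rankOneAt χ₀ y₀)) χ).trace) := by
        rw [h.lintegral_dotProduct_mulVec hp hy h₀ k (secondMomentDual_posSemidef hp C hone),
          sum_trace_mul_secondMomentStep]
    _ = ENNReal.ofReal (traceSum (secondMomentStep p C
          ((secondMomentStep p A ^ k) (rankOneAt χ₀ y₀)))) := by
        simp only [Matrix.one_mul, traceSum_apply]

end IsMarkovDriven

end MarkovDriven

section MarkovChain

variable {Ω : Type} [MeasurableSpace Ω] {μ : Measure Ω}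

lemma lintegral_comp_eq_sum {S : Type*} [Fintype S] [MeasurableSpace S]
    [MeasurableSingletonClass S] {Y : Ω → S} (hY : Measurable Y) (g : S → ENNReal) :
    ∫⁻ ω, g (Y ω) ∂μ = ∑ y, g y * μ {ω | Y ω = y} := by
  rw [← lintegral_map (measurable_of_countable g) hY, lintegral_fintype]
  refine Finset.sum_congr rfl fun y _ ↦ ?_
  rw [Measure.map_apply hY (measurableSet_singleton y)]
  rfl

namespace IsMarkovChain

variable {S S' : Type} {X : ℕ → Ω → S} {X' : ℕ → Ω → S'} {P : S → S → ℝ} {P' : S' → S' → ℝ}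

lemma prodMk [MeasurableSpace S] [MeasurableSingletonClass S] [MeasurableSpace S']
    [MeasurableSingletonClass S'] (h : IsMarkovChain μ X P) (h' : IsMarkovChain μ X' P')
    (hind : IndepFun (fun ω l ↦ X l ω) (fun ω l ↦ X' l ω) μ) :
    IsMarkovChain μ (fun k ω ↦ (X k ω, X' k ω)) fun x y ↦ P x.1 y.1 * P' x.2 y.2 := by
  intro k j i
  have hpast {R : Type} [MeasurableSpace R] [MeasurableSingletonClass R] (u : ℕ → R) :
      MeasurableSet {v : ℕ → R | ∀ l ≤ k, v l = u l} := by
    simp only [Set.ofPred_forall]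
    exact .iInter fun l ↦ .iInter fun _ ↦
      (measurableSet_singleton (u l)).preimage (measurable_pi_apply l)
  have hnext {R : Type} [MeasurableSpace R] [MeasurableSingletonClass R] (a : R) (u : ℕ → R) :
      MeasurableSet {v : ℕ → R | v (k + 1) = a ∧ ∀ l ≤ k, v l = u l} :=
    ((measurableSet_singleton a).preimage (measurable_pi_apply (k + 1))).inter (hpast u)
  rw [indepFun_iff_measure_inter_preimage_eq_mul] at hind
  have hpast_mul : μ {ω | ∀ l ≤ k, (X l ω, X' l ω) = i l} =
      μ {ω | ∀ l ≤ k, X l ω = (i l).1} * μ {ω | ∀ l ≤ k, X' l ω = (i l).2} := by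
    refine .trans (congrArg μ ?_) (hind _ _ (hpast fun l ↦ (i l).1) (hpast fun l ↦ (i l).2))
    ext ω
    simp only [Prod.ext_iff, forall_and, Set.mem_inter_iff, Set.mem_preimage, Set.mem_ofPred_eq]
  have hnext_mul : μ {ω | (X (k + 1) ω, X' (k + 1) ω) = j ∧ ∀ l ≤ k, (X l ω, X' l ω) = i l} =
      μ {ω | X (k + 1) ω = j.1 ∧ ∀ l ≤ k, X l ω = (i l).1} *
        μ {ω | X' (k + 1) ω = j.2 ∧ ∀ l ≤ k, X' l ω = (i l).2} := by
    refine .trans (congrArg μ ?_)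
      (hind _ _ (hnext j.1 fun l ↦ (i l).1) (hnext j.2 fun l ↦ (i l).2))
    ext ω
    simp only [Prod.ext_iff, forall_and, Set.mem_inter_iff, Set.mem_preimage, Set.mem_ofPred_eq]
    exact and_and_and_comm
  rw [hnext_mul, hpast_mul, ENNReal.toReal_mul, ENNReal.toReal_mul, h k j.1 fun l ↦ (i l).1,
    h' k j.2 fun l ↦ (i l).2, mul_mul_mul_comm]

lemma measure_history_succ [IsFiniteMeasure μ] (h : IsMarkovChain μ X P) (hP : 0 ≤ P) {k : ℕ}
    (x : Set.Iic k → S) (j : S) :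
    μ {ω | (fun l : Set.Iic k ↦ X l ω) = x ∧ X (k + 1) ω = j} =
      ENNReal.ofReal (P (x ⟨k, Set.self_mem_Iic⟩) j) * μ {ω | (fun l : Set.Iic k ↦ X l ω) = x} := by
  have hhist (ω : Ω) :
      (∀ l ≤ k, X l ω = x ⟨min l k, min_le_right l k⟩) ↔ (fun l : Set.Iic k ↦ X l ω) = x := by
    refine ⟨fun hω ↦ funext fun ⟨l, hl⟩ ↦ ?_, fun hω l hl ↦ ?_⟩
    · simpa only [min_eq_left (Set.mem_Iic.1 hl)] using hω l hl
    · simpa only [min_eq_left hl] using congrFun hω ⟨l, hl⟩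
  have hstep := h k j fun l ↦ x ⟨min l k, min_le_right l k⟩
  simp only [hhist, min_self] at hstep
  rw [← ENNReal.toReal_eq_toReal_iff' (measure_ne_top _ _)
    (ENNReal.mul_ne_top ENNReal.ofReal_ne_top (measure_ne_top _ _)), ENNReal.toReal_mul,
    ENNReal.toReal_ofReal (hP _ _), ← hstep]
  simp only [and_comm]

variable [Fintype S] [MeasurableSpace S] [MeasurableSingletonClass S] [IsFiniteMeasure μ]

lemma lintegral_history_succ (h : IsMarkovChain μ X P) (hP : 0 ≤ P) (hX : ∀ k, Measurable (X k))
    (k : ℕ) (g : S → (Set.Iic k → S) → ENNReal) :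
    ∫⁻ ω, g (X (k + 1) ω) (fun l ↦ X l ω) ∂μ =
      ∫⁻ ω, ∑ j, ENNReal.ofReal (P (X k ω) j) * g j (fun l ↦ X l ω) ∂μ := by
  have hhist : Measurable fun ω (l : Set.Iic k) ↦ X l ω := measurable_pi_lambda _ fun l ↦ hX l
  rw [lintegral_comp_eq_sum (hhist.prodMk (hX (k + 1))) fun x ↦ g x.2 x.1,
    lintegral_comp_eq_sum hhist fun x ↦ ∑ j, ENNReal.ofReal (P (x ⟨k, Set.self_mem_Iic⟩) j) * g j x,
    Fintype.sum_prod_type]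
  simp only [Prod.mk.injEq, h.measure_history_succ hP, Finset.sum_mul]
  exact Finset.sum_congr rfl fun x _ ↦ Finset.sum_congr rfl fun j _ ↦ by ring

lemma isMarkovDriven (h : IsMarkovChain μ X P) (hP : 0 ≤ P) (hX : ∀ k, Measurable (X k))
    {V : Type*} {Y : ℕ → Ω → V}
    (hY : ∀ k, (Y k).FactorsThrough fun ω (l : Set.Iic k) ↦ X l ω) :
    IsMarkovDriven μ P X Y := by
  intro k Φ
  cases isEmpty_or_nonempty Ω
  · simp only [lintegral_of_isEmpty]
  · have : Nonempty V := .map (Y k) inferInstance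
    obtain ⟨e, he⟩ := (Function.factorsThrough_iff (Y k)).1 (hY k)
    simp only [he]
    exact h.lintegral_history_succ hP hX k fun j x ↦ Φ j (e x)

end IsMarkovChain

end MarkovChain

section ExtendedChain

variable {NN MM T : ℕ} [NeZero T]

/-- The state space `𝔛` of the extended process as a type, so that sums over `𝔛` become sums over
a `Fintype`. -/
abbrev ExtMode (NN MM T : ℕ) [NeZero T] (f : Fin MM → Bool) : Type :=
  {χ : XT NN MM T // inX f χ}

instance (f : Fin MM → Bool) : Fintype (ExtMode NN MM T f) := Fintype.ofFinite _

open Classical in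
lemma sum_ite_inX {V : Type*} [AddCommMonoid V] (f : Fin MM → Bool) (g : XT NN MM T → V) :
    ∑ χ, (if inX f χ then g χ else 0) = ∑ χ : ExtMode NN MM T f, g χ.1 := by
  rw [← Finset.sum_filter]
  exact Finset.sum_subtype _ (by simp) g

/-- The value of `r̄ (k + 1)` as a function of `r̄ k` and of `(r (k + 1), s (k + 1))`. -/
def extStep (f : Fin MM → Bool) (χ : XT NN MM T) (x : Fin NN × Fin MM) : ExtMode NN MM T f :=
  ⟨if f x.2 then (x.1, x.2, x.1, 0) else (x.1, x.2, χ.2.2.1, χ.2.2.2 + 1), by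
    split_ifs with hf <;> simp [inX, hf]⟩

lemma extStep_injective (f : Fin MM → Bool) (χ : XT NN MM T) :
    Function.Injective (extStep f χ) := by
  refine Function.LeftInverse.injective (g := fun χ' ↦ (χ'.1.1, χ'.1.2.1)) fun x ↦ ?_
  by_cases hf : f x.2 <;> simp [extStep, hf]

lemma pbar_extStep (P : Matrix (Fin NN) (Fin NN) ℝ) (Q : Matrix (Fin MM) (Fin MM) ℝ)
    (f : Fin MM → Bool) (χ : XT NN MM T) (x : Fin NN × Fin MM) :
    pbar P Q f χ (extStep f χ x).1 = P χ.1 x.1 * Q χ.2.1 x.2 := by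
  by_cases hf : f x.2 <;> simp [pbar, extStep, hf]

lemma pbar_eq_zero_of_notMem_range (P : Matrix (Fin NN) (Fin NN) ℝ) (Q : Matrix (Fin MM) (Fin MM) ℝ)
    {f : Fin MM → Bool} {χ : XT NN MM T} {χ' : ExtMode NN MM T f}
    (h : χ' ∉ Set.range (extStep f χ)) : pbar P Q f χ χ'.1 = 0 := by
  obtain ⟨⟨a, b, g, d⟩, hχ'⟩ := χ'
  have hne : extStep f χ (a, b) ≠ ⟨(a, b, g, d), hχ'⟩ := fun hab ↦ h ⟨(a, b), hab⟩
  by_cases hf : f b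
  · obtain ⟨rfl, rfl⟩ : a = g ∧ d = 0 := hχ' hf
    exact absurd (by simp [extStep, hf]) hne
  · have hgd : ¬(g = χ.2.2.1 ∧ d = χ.2.2.2 + 1) := by
      rintro ⟨rfl, rfl⟩
      exact hne (by simp [extStep, hf])
    simp [pbar, hf, hgd]

/-- The transition probabilities `p̄` of the extended process, restricted to `𝔛`. -/
def extProb (P : Matrix (Fin NN) (Fin NN) ℝ) (Q : Matrix (Fin MM) (Fin MM) ℝ)
    (f : Fin MM → Bool) (χ χ' : ExtMode NN MM T f) : ℝ :=
  pbar P Q f χ.1 χ'.1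

lemma extProb_nonneg {P : Matrix (Fin NN) (Fin NN) ℝ} {Q : Matrix (Fin MM) (Fin MM) ℝ}
    (hP : ∀ i j, 0 ≤ P i j) (hQ : ∀ i j, 0 ≤ Q i j) (f : Fin MM → Bool) :
    0 ≤ extProb (T := T) P Q f := fun χ χ' ↦ by
  refine mul_nonneg (mul_nonneg ?_ (hP _ _)) (hQ _ _)
  split_ifs <;> norm_num

lemma Dop_eq_sum {n : ℕ} (P : Matrix (Fin NN) (Fin NN) ℝ) (Q : Matrix (Fin MM) (Fin MM) ℝ)
    {f : Fin MM → Bool} (R : XT NN MM T → Matrix (Fin n) (Fin n) ℝ) (χ : ExtMode NN MM T f) :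
    Dop P Q f R χ.1 = ∑ χ', extProb P Q f χ' χ • R χ'.1 :=
  sum_ite_inX f fun χ' ↦ pbar P Q f χ' χ.1 • R χ'

lemma Dop_posSemidef {n : ℕ} {P : Matrix (Fin NN) (Fin NN) ℝ} {Q : Matrix (Fin MM) (Fin MM) ℝ}
    (hP : ∀ i j, 0 ≤ P i j) (hQ : ∀ i j, 0 ≤ Q i j) {f : Fin MM → Bool}
    {R : XT NN MM T → Matrix (Fin n) (Fin n) ℝ} (hR : ∀ χ, inX f χ → (R χ).PosSemidef)
    (χ : ExtMode NN MM T f) : (Dop P Q f R χ.1).PosSemidef := by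
  rw [Dop_eq_sum]
  exact posSemidef_sum _ fun χ' _ ↦ (hR χ'.1 χ'.2).smul (extProb_nonneg hP hQ f χ' χ)

lemma sum_ofReal_mul_extStep (P : Matrix (Fin NN) (Fin NN) ℝ) (Q : Matrix (Fin MM) (Fin MM) ℝ)
    {f : Fin MM → Bool} (χ : XT NN MM T) (Ψ : ExtMode NN MM T f → ENNReal) :
    ∑ x : Fin NN × Fin MM, ENNReal.ofReal (P χ.1 x.1 * Q χ.2.1 x.2) * Ψ (extStep f χ x) =
      ∑ χ', ENNReal.ofReal (pbar P Q f χ χ'.1) * Ψ χ' := by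
  refine Fintype.sum_of_injective (extStep f χ) (extStep_injective f χ) _ _ (fun χ' h ↦ ?_)
    fun x ↦ ?_
  · rw [pbar_eq_zero_of_notMem_range P Q h, ENNReal.ofReal_zero, zero_mul]
  · rw [pbar_extStep]

lemma intToFin_zero : intToFin T 0 = 0 := Fin.ext (by simp [intToFin])

lemma intToFin_succ (a : ℤ) : intToFin T (a + 1) = intToFin T a + 1 := by
  have hT : (T : ℤ) ≠ 0 := Nat.cast_ne_zero.2 (NeZero.ne T)
  refine Fin.ext (Nat.cast_injective (R := ℤ) ?_)
  rw [Fin.val_add, Fin.val_one']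
  push_cast
  simp only [intToFin, Int.toNat_of_nonneg (Int.emod_nonneg _ hT), Int.emod_add_emod,
    Int.add_emod_emod]

variable {Ω : Type} (r : ℕ → Ω → Fin NN) (s : ℕ → Ω → Fin MM) (f : Fin MM → Bool) (τ₀ : ℤ)
  (σ₀ : Fin NN)

lemma rbarProc_zero (ω : Ω) : rbarProc (T := T) r s f τ₀ σ₀ 0 ω =
    if f (s 0 ω) then (r 0 ω, s 0 ω, r 0 ω, 0) else (r 0 ω, s 0 ω, σ₀, intToFin T (-τ₀)) := by
  by_cases hf : f (s 0 ω) <;> simp [rbarProc, sigmaProc, rhoProc, tauZ, hf, intToFin_zero]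

lemma rbarProc_succ (k : ℕ) (ω : Ω) : rbarProc (T := T) r s f τ₀ σ₀ (k + 1) ω =
    (extStep f (rbarProc r s f τ₀ σ₀ k ω) (r (k + 1) ω, s (k + 1) ω)).1 := by
  by_cases hf : f (s (k + 1) ω)
  · have hobs : ∃ j ≤ k + 1, f (s j ω) = true := ⟨k + 1, le_rfl, hf⟩
    simp only [extStep, rbarProc, sigmaProc, rhoProc, tauZ, if_pos hobs, Nat.findGreatest_succ,
      if_pos hf, sub_self, intToFin_zero]
  · have hobs : (∃ j ≤ k + 1, f (s j ω) = true) ↔ ∃ j ≤ k, f (s j ω) = true := by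
      simp only [Nat.le_succ_iff, or_and_right, exists_or, exists_eq_left, hf,
        Bool.false_eq_true, or_false]
    simp only [extStep, rbarProc, sigmaProc, rhoProc, tauZ, hobs, Nat.findGreatest_succ, if_neg hf]
    rw [← intToFin_succ, Nat.cast_succ, sub_add_eq_add_sub]

lemma inX_rbarProc (k : ℕ) (ω : Ω) : inX f (rbarProc (T := T) r s f τ₀ σ₀ k ω) := by
  cases k with
  | zero =>
    rw [rbarProc_zero]
    split_ifs with hf <;> simp [inX, hf]
  | succ k => exact rbarProc_succ (T := T) r s f τ₀ σ₀ k ω ▸ (extStep f _ _).2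

variable {r s f τ₀ σ₀} {k : ℕ} {ω ω' : Ω}

lemma rbarProc_congr (h : ∀ l ≤ k, (r l ω, s l ω) = (r l ω', s l ω')) :
    rbarProc (T := T) r s f τ₀ σ₀ k ω = rbarProc r s f τ₀ σ₀ k ω' := by
  induction k with
  | zero =>
    obtain ⟨hr, hs⟩ := Prod.mk.inj (h 0 le_rfl)
    rw [rbarProc_zero, rbarProc_zero, hr, hs]
  | succ k ih => rw [rbarProc_succ, rbarProc_succ, ih fun l hl ↦ h l (hl.trans k.le_succ),
      h _ le_rfl]

lemma traj_congr {Ω S : Type} {n q : ℕ} {A : S → Matrix (Fin n) (Fin n) ℝ}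
    {E : S → Matrix (Fin n) (Fin q) ℝ} {mode : ℕ → Ω → S} {w : ℕ → Ω → Fin q → ℝ} {x₀ : Fin n → ℝ}
    {k : ℕ} {ω ω' : Ω} (hmode : ∀ l < k, mode l ω = mode l ω') (hw : ∀ l < k, w l ω = w l ω') :
    traj A E mode w x₀ k ω = traj A E mode w x₀ k ω' := by
  induction k with
  | zero => rfl
  | succ k ih =>
    simp only [traj, hmode k k.lt_succ_self, hw k k.lt_succ_self,
      ih (fun l hl ↦ hmode l (hl.trans k.lt_succ_self))
        fun l hl ↦ hw l (hl.trans k.lt_succ_self)]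

end ExtendedChain

section ClosedLoop

open scoped MatrixOrder

variable {NN MM T n q : ℕ} [NeZero T] {P : Matrix (Fin NN) (Fin NN) ℝ}
  {Q : Matrix (Fin MM) (Fin MM) ℝ} {f : Fin MM → Bool}

/-- The extended process `r̄` of a realization, as a process with values in `𝔛`. -/
def extMode (S : MJLSReal NN MM P Q) (f : Fin MM → Bool) (τ₀ : ℤ) (σ₀ : Fin NN) (k : ℕ)
    (ω : S.Ω) : ExtMode NN MM T f :=
  ⟨rbarProc S.r S.s f τ₀ σ₀ k ω, inX_rbarProc S.r S.s f τ₀ σ₀ k ω⟩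

attribute [local instance] MJLSReal.inst MJLSReal.prob

lemma isMarkovDriven_extMode (hP : ∀ i j, 0 ≤ P i j) (hQ : ∀ i j, 0 ≤ Q i j)
    (S : MJLSReal NN MM P Q) (τ₀ : ℤ) (σ₀ : Fin NN) (A : XT NN MM T → Matrix (Fin n) (Fin n) ℝ)
    (E : XT NN MM T → Matrix (Fin n) (Fin q) ℝ) (w : ℕ → Fin q → ℝ) (x₀ : Fin n → ℝ) :
    IsMarkovDriven S.μ (extProb P Q f) (extMode (T := T) S f τ₀ σ₀)
      fun k ↦ traj A E (rbarProc S.r S.s f τ₀ σ₀) (fun j _ ↦ w j) x₀ (k + 1) := by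
  intro k Φ
  set y := fun k ↦ traj A E (rbarProc S.r S.s f τ₀ σ₀) (fun j _ ↦ w j) x₀ (k + 1)
  have hfactors (k : ℕ) : (fun ω ↦ (rbarProc (T := T) S.r S.s f τ₀ σ₀ k ω, y k ω)).FactorsThrough
      fun ω (l : Set.Iic k) ↦ (S.r l ω, S.s l ω) := by
    intro ω ω' hωω'
    have hagree (l : ℕ) (hl : l ≤ k) : (S.r l ω, S.s l ω) = (S.r l ω', S.s l ω') :=
      congrFun hωω' ⟨l, hl⟩
    exact Prod.ext (rbarProc_congr hagree) <| traj_congr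
      (fun l hl ↦ rbarProc_congr fun i hi ↦ hagree i (hi.trans (Nat.lt_succ_iff.1 hl)))
      fun _ _ ↦ rfl
  have hpair := (S.markov_r.prodMk S.markov_s S.indep).isMarkovDriven
    (fun x y ↦ mul_nonneg (hP x.1 y.1) (hQ x.2 y.2))
    (fun l ↦ (S.meas_r l).prodMk (S.meas_s l)) hfactors
  calc ∫⁻ ω, Φ (extMode S f τ₀ σ₀ (k + 1) ω) (y k ω) ∂S.μ
      = ∫⁻ ω, Φ (extStep f (rbarProc S.r S.s f τ₀ σ₀ k ω) (S.r (k + 1) ω, S.s (k + 1) ω))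
          (y k ω) ∂S.μ :=
        lintegral_congr fun ω ↦ congrArg (Φ · (y k ω)) (Subtype.ext (rbarProc_succ ..))
    _ = ∫⁻ ω, ∑ x : Fin NN × Fin MM, ENNReal.ofReal (P (S.r k ω) x.1 * Q (S.s k ω) x.2) *
          Φ (extStep f (rbarProc S.r S.s f τ₀ σ₀ k ω) x) (y k ω) ∂S.μ :=
        hpair k fun x v ↦ Φ (extStep f v.1 x) v.2
    _ = ∫⁻ ω, ∑ χ, ENNReal.ofReal (extProb P Q f (extMode S f τ₀ σ₀ k ω) χ) * Φ χ (y k ω) ∂S.μ :=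
        lintegral_congr fun ω ↦
          sum_ofReal_mul_extStep P Q (rbarProc S.r S.s f τ₀ σ₀ k ω) fun χ ↦ Φ χ (y k ω)

lemma sqE_eq_ofReal_dotProduct {d : ℕ} (v : Fin d → ℝ) : sqE v = ENNReal.ofReal (v ⬝ᵥ v) := by
  simp only [sqE, dotProduct, sq]

section InitialMode

variable (hP : ∀ i j, 0 ≤ P i j) (hQ : ∀ i j, 0 ≤ Q i j) (S : MJLSReal NN MM P Q) {τ₀ : ℤ}
  {σ₀ : Fin NN} {A : XT NN MM T → Matrix (Fin n) (Fin n) ℝ}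
  {E : XT NN MM T → Matrix (Fin n) (Fin q) ℝ} {w : ℕ → Fin q → ℝ} (hw : ∀ k, w (k + 1) = 0)
  {χ : ExtMode NN MM T f} (h₀ : ∀ᵐ ω ∂S.μ, rbarProc S.r S.s f τ₀ σ₀ 0 ω = χ.1) (x₀ : Fin n → ℝ)

include hP hQ hw h₀

lemma lintegral_sqE_traj_succ (k : ℕ) :
    ∫⁻ ω, sqE (traj A E (rbarProc S.r S.s f τ₀ σ₀) (fun j _ ↦ w j) x₀ (k + 1) ω) ∂S.μ =
      ENNReal.ofReal (traceSum ((secondMomentStep (extProb P Q f) (fun χ ↦ A χ.1) ^ k)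
        (rankOneAt χ (A χ.1 *ᵥ x₀ + E χ.1 *ᵥ w 0)))) := by
  simp only [sqE_eq_ofReal_dotProduct]
  refine (isMarkovDriven_extMode hP hQ S τ₀ σ₀ A E w x₀).lintegral_dotProduct_self
    (extProb_nonneg hP hQ f) (fun k ω ↦ ?_) (h₀.mono fun ω hω ↦ ⟨Subtype.ext hω, ?_⟩) k
  · simp only [traj, hw, mulVec_zero, add_zero, extMode]
  · simp only [traj, hω]

lemma lintegral_sqE_mulVec_traj_succ {ℓ : ℕ} (C : XT NN MM T → Matrix (Fin ℓ) (Fin n) ℝ) (k : ℕ) :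
    ∫⁻ ω, sqE (C (rbarProc S.r S.s f τ₀ σ₀ (k + 1) ω) *ᵥ
        traj A E (rbarProc S.r S.s f τ₀ σ₀) (fun j _ ↦ w j) x₀ (k + 1) ω) ∂S.μ =
      ENNReal.ofReal (traceSum (secondMomentStep (extProb P Q f) (fun χ ↦ C χ.1)
        ((secondMomentStep (extProb P Q f) (fun χ ↦ A χ.1) ^ k)
          (rankOneAt χ (A χ.1 *ᵥ x₀ + E χ.1 *ᵥ w 0))))) := by
  simp only [sqE_eq_ofReal_dotProduct]
  refine (isMarkovDriven_extMode hP hQ S τ₀ σ₀ A E w x₀).lintegral_output_dotProduct_self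
    (extProb_nonneg hP hQ f) (fun k ω ↦ ?_) (h₀.mono fun ω hω ↦ ⟨Subtype.ext hω, ?_⟩)
    (fun χ ↦ C χ.1) k
  · simp only [traj, hw, mulVec_zero, add_zero, extMode]
  · simp only [traj, hω]

end InitialMode

variable {m ℓ : ℕ} {A : Fin NN → Matrix (Fin n) (Fin n) ℝ} {B : Fin NN → Matrix (Fin n) (Fin m) ℝ}
  {C : Fin NN → Matrix (Fin ℓ) (Fin n) ℝ} {D : Fin NN → Matrix (Fin ℓ) (Fin m) ℝ}
  {E : Fin NN → Matrix (Fin n) (Fin q) ℝ} {K : Fin NN → Fin T → Matrix (Fin m) (Fin n) ℝ}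

lemma meanSquareStable_of_posDef_sub (hP : ∀ i j, 0 ≤ P i j) (hQ : ∀ i j, 0 ≤ Q i j)
    {R : ExtMode NN MM T f → Matrix (Fin n) (Fin n) ℝ} (hR : ∀ χ, (R χ).PosDef)
    (hstein : ∀ χ,
      (R χ - secondMomentStep (extProb P Q f) (fun χ ↦ AKmat A B K χ.1) R χ).PosDef) :
    MeanSquareStable P Q f A B E K := by
  obtain ⟨c, lam, hc, hlam₀, hlam₁, hbound⟩ :=
    exists_geometric_bound_of_posDef_sub (extProb_nonneg hP hQ f) hR hstein
  refine ⟨1 + c / lam, by positivity, lam, hlam₀.le, hlam₁,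
    fun S τ₀ _ σ₀ r₀ s₀ hinit x₀ k ↦ ?_⟩
  have hx₀ : ∑ i, x₀ i ^ 2 = x₀ ⬝ᵥ x₀ := by simp only [dotProduct, sq]
  have hx₀_nonneg : 0 ≤ x₀ ⬝ᵥ x₀ := by simpa using dotProduct_star_self_nonneg x₀
  rw [hx₀]
  cases k with
  | zero =>
    simp only [traj, sqE_eq_ofReal_dotProduct, lintegral_const, measure_univ, mul_one, pow_zero]
    exact ENNReal.ofReal_le_ofReal (le_mul_of_one_le_left hx₀_nonneg
      (le_add_of_nonneg_right (by positivity)))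
  | succ k =>
    obtain ⟨ω₀, hω₀⟩ := hinit.exists
    let χ₀ := extMode (T := T) S f τ₀ σ₀ 0 ω₀
    have hχ₀ : ∀ᵐ ω ∂S.μ, rbarProc S.r S.s f τ₀ σ₀ 0 ω = χ₀.1 := hinit.mono fun ω hω ↦
      rbarProc_congr fun l hl ↦ by simp only [Nat.le_zero.1 hl, hω, hω₀]
    refine (lintegral_sqE_traj_succ hP hQ S (fun _ ↦ rfl) hχ₀ x₀ k).trans_le
      (ENNReal.ofReal_le_ofReal ?_)
    rw [mulVec_zero, add_zero]
    calc _ ≤ c * lam ^ k * (x₀ ⬝ᵥ x₀) := hbound χ₀ x₀ k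
      _ = c / lam * lam ^ (k + 1) * (x₀ ⬝ᵥ x₀) := by field_simp; ring
      _ ≤ (1 + c / lam) * lam ^ (k + 1) * (x₀ ⬝ᵥ x₀) := by gcongr; linarith

lemma H2TermSigma_eq_tsum (hP : ∀ i j, 0 ≤ P i j) (hQ : ∀ i j, 0 ≤ Q i j)
    (S : MJLSReal NN MM P Q) {τ₀ : ℤ} {σ₀ : Fin NN} {χ : ExtMode NN MM T f}
    (h₀ : ∀ᵐ ω ∂S.μ, rbarProc S.r S.s f τ₀ σ₀ 0 ω = χ.1) (i : Fin q) :
    H2TermSigma S f τ₀ σ₀ A B C D E K i =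
      ∑' k, ENNReal.ofReal (traceSum (secondMomentStep (extProb P Q f) (fun χ ↦ CKmat C D K χ.1)
        ((secondMomentStep (extProb P Q f) (fun χ ↦ AKmat A B K χ.1) ^ k)
          (rankOneAt χ ((E χ.1.1).col i))))) := by
  have himpulse : (fun j : Fin q ↦ if 0 = 0 ∧ j = i then (1 : ℝ) else 0) = Pi.single i 1 := by
    funext j
    simp [Pi.single_apply]
  rw [H2TermSigma, tsum_eq_zero_add' ENNReal.summable]
  have hz₀ : ∫⁻ ω, sqE (CKmat C D K (rbarProc S.r S.s f τ₀ σ₀ 0 ω) *ᵥ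
      traj (AKmat A B K) (fun χ ↦ E χ.1) (rbarProc S.r S.s f τ₀ σ₀) (impulse q i) 0 0 ω) ∂S.μ =
      0 := by
    simp [traj, sqE]
  rw [hz₀, zero_add]
  refine tsum_congr fun k ↦ (lintegral_sqE_mulVec_traj_succ hP hQ S
    (fun k ↦ by simp [Pi.zero_def]) h₀ 0 (CKmat C D K) k).trans ?_
  rw [mulVec_zero, zero_add, himpulse, mulVec_single_one]

lemma h2SqLtSigma_of_le (hP : ∀ i j, 0 ≤ P i j) (hQ : ∀ i j, 0 ≤ Q i j) {μbar : XT NN MM T → ℝ}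
    (hμbar : ∀ χ, inX f χ → 0 ≤ μbar χ) {R : ExtMode NN MM T f → Matrix (Fin n) (Fin n) ℝ}
    (hR : 0 ≤ R)
    (hstein : (fun χ ↦ μbar χ.1 • (E χ.1.1 * (E χ.1.1)ᵀ)) +
      secondMomentStep (extProb P Q f) (fun χ ↦ AKmat A B K χ.1) R ≤ R) {γ : ℝ}
    (hγ : traceSum (secondMomentStep (extProb P Q f) (fun χ ↦ CKmat C D K χ.1) R) < γ) :
    H2SqLtSigma P Q f A B C D E K μbar γ := by
  intro S τ σ hS
  have hp : 0 ≤ extProb (T := T) P Q f := extProb_nonneg hP hQ f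
  set T₀ := secondMomentStep (extProb P Q f) fun χ ↦ AKmat A B K χ.1
  set φ := traceSum ∘ₗ secondMomentStep (extProb P Q f) fun χ ↦ CKmat C D K χ.1
  have hφ : Monotone φ := traceSum_monotone.comp (secondMomentStep_monotone hp _)
  have hφR : 0 ≤ φ R := by simpa only [map_zero] using hφ hR
  simp only [sum_ite_inX]
  calc ∑ i, ∑ χ : ExtMode NN MM T f, ENNReal.ofReal (μbar χ.1) *
          H2TermSigma (S i χ.1) f (τ i χ.1) (σ i χ.1) A B C D E K i
      = ∑ x : Fin q × ExtMode NN MM T f, ENNReal.ofReal (μbar x.2.1) *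
          ∑' k, ENNReal.ofReal (φ ((T₀ ^ k) (rankOneAt x.2 ((E x.2.1.1).col x.1)))) := by
        rw [Fintype.sum_prod_type]
        exact Finset.sum_congr rfl fun i _ ↦ Finset.sum_congr rfl fun χ _ ↦
          congrArg _ (H2TermSigma_eq_tsum hP hQ (S i χ.1) (hS i χ.1 χ.2).2 i)
    _ ≤ ENNReal.ofReal (φ R) := by
        refine sum_mul_tsum_ofReal_apply_pow_le
          (a := fun x : Fin q × ExtMode NN MM T f ↦ μbar x.2.1)
          (secondMomentStep_monotone hp _) hφ (fun x ↦ hμbar _ x.2.2)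
          (fun x ↦ rankOneAt_nonneg x.2 _) hR ?_
        rwa [sum_smul_rankOneAt_col (fun χ : ExtMode NN MM T f ↦ μbar χ.1) fun χ ↦ E χ.1.1]
    _ < ENNReal.ofReal γ := (ENNReal.ofReal_lt_ofReal_iff_of_nonneg hφR).2 hγ

end ClosedLoop

section LMI

open scoped MatrixOrder

variable {NN MM T n m q ℓ : ℕ} [NeZero T] {P : Matrix (Fin NN) (Fin NN) ℝ}
  {Qm : Matrix (Fin MM) (Fin MM) ℝ} {f : Fin MM → Bool} {A : Fin NN → Matrix (Fin n) (Fin n) ℝ}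
  {B : Fin NN → Matrix (Fin n) (Fin m) ℝ} {C : Fin NN → Matrix (Fin ℓ) (Fin n) ℝ}
  {D : Fin NN → Matrix (Fin ℓ) (Fin m) ℝ} {E : Fin NN → Matrix (Fin n) (Fin q) ℝ} {γ₀ : ℝ}
  {μbar : XT NN MM T → ℝ} {W : XT NN MM T → Matrix (Fin ℓ) (Fin ℓ) ℝ}
  {R : XT NN MM T → Matrix (Fin n) (Fin n) ℝ} {G : Fin NN → Fin T → Matrix (Fin n) (Fin n) ℝ}
  {F : Fin NN → Fin T → Matrix (Fin m) (Fin n) ℝ}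

open Classical in
theorem h2_lmi_control_general (hP : P ∈ rowStochastic ℝ (Fin NN))
    (hQ : Qm ∈ rowStochastic ℝ (Fin MM)) (hμbar : ∀ χ, inX f χ → 0 ≤ μbar χ)
    (hLMI1 : ∀ χ : XT NN MM T, inX f χ →
      (fromBlocks (R χ - μbar χ • (E χ.1 * (E χ.1)ᵀ))
        (A χ.1 * G χ.2.2.1 χ.2.2.2 + B χ.1 * F χ.2.2.1 χ.2.2.2)
        (A χ.1 * G χ.2.2.1 χ.2.2.2 + B χ.1 * F χ.2.2.1 χ.2.2.2)ᵀ
        (G χ.2.2.1 χ.2.2.2 + (G χ.2.2.1 χ.2.2.2)ᵀ - Dop P Qm f R χ)).PosDef)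
    (hLMI2 : ∀ χ : XT NN MM T, inX f χ →
      (fromBlocks (W χ)
        (C χ.1 * G χ.2.2.1 χ.2.2.2 + D χ.1 * F χ.2.2.1 χ.2.2.2)
        (C χ.1 * G χ.2.2.1 χ.2.2.2 + D χ.1 * F χ.2.2.1 χ.2.2.2)ᵀ
        (G χ.2.2.1 χ.2.2.2 + (G χ.2.2.1 χ.2.2.2)ᵀ - Dop P Qm f R χ)).PosSemidef)
    (htr : (∑ χ : XT NN MM T, if inX f χ then (W χ).trace else 0) < γ₀) :
    (∀ g d, Admissible f g d → IsUnit (G g d)) ∧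
    ∀ K : Fin NN → Fin T → Matrix (Fin m) (Fin n) ℝ,
      (∀ g d, Admissible f g d → K g d = F g d * (G g d)⁻¹) →
      MeanSquareStable P Qm f A B E K ∧ H2SqLtSigma P Qm f A B C D E K μbar γ₀ := by
  have hRpos (χ : ExtMode NN MM T f) : (R χ.1).PosDef :=
    posDef_of_sub_smul_mul_transpose (hμbar χ.1 χ.2) (posDef₁₁_of_fromBlocks (hLMI1 χ.1 χ.2))
  have hG (χ : ExtMode NN MM T f) : IsUnit (G χ.1.2.2.1 χ.1.2.2.2) := by
    refine isUnit_of_posDef_add_conjTranspose ?_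
    simpa using (posDef₂₂_of_fromBlocks (hLMI1 χ.1 χ.2)).add_posSemidef
      (Dop_posSemidef hP.1 hQ.1 (fun χ hχ ↦ (hRpos ⟨χ, hχ⟩).posSemidef) χ)
  refine ⟨fun g d ⟨α, β, hχ⟩ ↦ hG ⟨_, hχ⟩, fun K hK ↦ ?_⟩
  have hKG (χ : ExtMode NN MM T f) :
      K χ.1.2.2.1 χ.1.2.2.2 * G χ.1.2.2.1 χ.1.2.2.2 = F χ.1.2.2.1 χ.1.2.2.2 := by
    rw [hK _ _ ⟨χ.1.1, χ.1.2.1, χ.2⟩,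
      nonsing_inv_mul_cancel_right _ _ ((isUnit_iff_isUnit_det _).1 (hG χ))]
  have hstein (χ : ExtMode NN MM T f) : (R χ.1 - μbar χ.1 • (E χ.1.1 * (E χ.1.1)ᵀ) -
      secondMomentStep (extProb P Qm f) (fun χ ↦ AKmat A B K χ.1) (fun χ ↦ R χ.1) χ).PosDef := by
    have h := hLMI1 χ.1 χ.2
    rw [← hKG χ, ← Matrix.mul_assoc, ← Matrix.add_mul, Dop_eq_sum] at h
    exact posDef_sub_of_fromBlocks h
  have houtput (χ : ExtMode NN MM T f) : (W χ.1 - secondMomentStep (extProb P Qm f)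
      (fun χ ↦ CKmat C D K χ.1) (fun χ ↦ R χ.1) χ).PosSemidef := by
    have h := hLMI2 χ.1 χ.2
    rw [← hKG χ, ← Matrix.mul_assoc, ← Matrix.add_mul, Dop_eq_sum] at h
    exact posSemidef_sub_of_fromBlocks h
  constructor
  · refine meanSquareStable_of_posDef_sub hP.1 hQ.1 hRpos fun χ ↦ ?_
    refine posDef_of_sub_smul_mul_transpose (E := E χ.1.1) (hμbar χ.1 χ.2) ?_
    exact sub_right_comm (R χ.1) _ _ ▸ hstein χ
  · refine h2SqLtSigma_of_le hP.1 hQ.1 hμbar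
      (fun χ ↦ nonneg_iff_posSemidef.2 (hRpos χ).posSemidef) (fun χ ↦ ?_) ?_
    · exact le_iff.2 (by simpa only [Pi.add_apply, sub_sub] using (hstein χ).posSemidef)
    · refine lt_of_le_of_lt (traceSum_monotone houtput) ?_
      rwa [traceSum_apply, ← sum_ite_inX f fun χ ↦ (W χ).trace]

end LMI

open Classical in
/-- the `H₂` LMIs (together with the distribution `ν` of `(σ₀,ρ₀)`
inducing `μ̄`) imply invertibility of the `G_{γ,δ}` and, for gains
`K_{γ,δ} = F_{γ,δ} G_{γ,δ}⁻¹`, mean square stability of `Σ_K` and `‖Σ_K‖₂² < γ₀`. -/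
theorem h2_lmi_control
    {NN MM T n m q ℓ : ℕ} [NeZero NN] [NeZero MM] [NeZero T]
    [NeZero n] [NeZero m] [NeZero q] [NeZero ℓ]
    (P : Matrix (Fin NN) (Fin NN) ℝ) (Qm : Matrix (Fin MM) (Fin MM) ℝ)
    (hP0 : ∀ i j, 0 ≤ P i j) (hP1 : ∀ i, ∑ j, P i j = 1)
    (hQ0 : ∀ i j, 0 ≤ Qm i j) (hQ1 : ∀ i, ∑ j, Qm i j = 1)
    (f : Fin MM → Bool)
    (A : Fin NN → Matrix (Fin n) (Fin n) ℝ) (B : Fin NN → Matrix (Fin n) (Fin m) ℝ)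
    (C : Fin NN → Matrix (Fin ℓ) (Fin n) ℝ) (D : Fin NN → Matrix (Fin ℓ) (Fin m) ℝ)
    (E : Fin NN → Matrix (Fin n) (Fin q) ℝ)
    (γ₀ : ℝ) (hγ₀ : 0 < γ₀)
    (μr : Fin NN → ℝ) (hμr0 : ∀ i, 0 ≤ μr i) (hμr1 : ∑ i, μr i = 1)
    (μs : Fin MM → ℝ) (hμs0 : ∀ i, 0 ≤ μs i) (hμs1 : ∑ i, μs i = 1)
    (ν : Fin NN → Fin T → ℝ) (hν0 : ∀ g d, 0 ≤ ν g d)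
    (hν1 : ∑ g : Fin NN, ∑ d : Fin T, ν g d = 1)
    (μbar : XT NN MM T → ℝ)
    (hμbar : ∀ χ : XT NN MM T, μbar χ =
      if f χ.2.1 = true then μr χ.1 * μs χ.2.1
      else μr χ.1 * μs χ.2.1 * ν χ.2.2.1 χ.2.2.2)
    (W : XT NN MM T → Matrix (Fin ℓ) (Fin ℓ) ℝ)
    (hWsym : ∀ χ, inX f χ → (W χ).IsHermitian)
    (R : XT NN MM T → Matrix (Fin n) (Fin n) ℝ)
    (hRsym : ∀ χ, inX f χ → (R χ).IsHermitian)
    (G : Fin NN → Fin T → Matrix (Fin n) (Fin n) ℝ)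
    (F : Fin NN → Fin T → Matrix (Fin m) (Fin n) ℝ)
    (hLMI1 : ∀ χ : XT NN MM T, inX f χ →
      (Matrix.fromBlocks (R χ - μbar χ • (E χ.1 * (E χ.1)ᵀ))
        (A χ.1 * G χ.2.2.1 χ.2.2.2 + B χ.1 * F χ.2.2.1 χ.2.2.2)
        (A χ.1 * G χ.2.2.1 χ.2.2.2 + B χ.1 * F χ.2.2.1 χ.2.2.2)ᵀ
        (G χ.2.2.1 χ.2.2.2 + (G χ.2.2.1 χ.2.2.2)ᵀ - Dop P Qm f R χ)).PosDef)
    (hLMI2 : ∀ χ : XT NN MM T, inX f χ →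
      (Matrix.fromBlocks (W χ)
        (C χ.1 * G χ.2.2.1 χ.2.2.2 + D χ.1 * F χ.2.2.1 χ.2.2.2)
        (C χ.1 * G χ.2.2.1 χ.2.2.2 + D χ.1 * F χ.2.2.1 χ.2.2.2)ᵀ
        (G χ.2.2.1 χ.2.2.2 + (G χ.2.2.1 χ.2.2.2)ᵀ - Dop P Qm f R χ)).PosDef)
    (htr : (∑ χ : XT NN MM T, if inX f χ then (W χ).trace else 0) < γ₀) :
    (∀ g d, Admissible f g d → IsUnit (G g d)) ∧
    ∀ K : Fin NN → Fin T → Matrix (Fin m) (Fin n) ℝ,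
      (∀ g d, Admissible f g d → K g d = F g d * (G g d)⁻¹) →
      MeanSquareStable P Qm f A B E K
        ∧ H2SqLtSigma P Qm f A B C D E K μbar γ₀ := by
  have hμbar₀ (χ : XT NN MM T) (_ : inX f χ) : 0 ≤ μbar χ := by
    rw [hμbar]
    have hμrs : 0 ≤ μr χ.1 * μs χ.2.1 := mul_nonneg (hμr0 _) (hμs0 _)
    split_ifs
    exacts [hμrs, mul_nonneg hμrs (hν0 _ _)]
  exact h2_lmi_control_general (mem_rowStochastic_iff_sum.2 ⟨hP0, hP1⟩)
    (mem_rowStochastic_iff_sum.2 ⟨hQ0, hQ1⟩) hμbar₀ hLMI1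
    (fun χ hχ ↦ (hLMI2 χ hχ).posSemidef) htr

end
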